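/- arXiv:2308.15082 — 5 statements merged into one kernel-verified Lean document; each statement's English description precedes it below -/
import Mathlib

section
/- Let H and U be complex Hilbert spaces, D a linear subspace of H, T : D → H and S : D → U linear maps, and β > 0. Assume there exist ω > 0 and C₀ > 0 such that for every λ ∈ ℂ with Re λ > ω and every φ ∈ D one has (Re λ − ω)·‖φ‖ ≤ C₀·‖λφ − Tφ‖. Then: (a) if there exists C > 0 such that ‖φ‖² ≤ C·(‖λφ − Tφ‖² + ‖Sφ‖²) for every λ ∈ ℂ with Re λ > −β and every φ ∈ D, then there exists C' > 0 such that (Re λ + β)²·‖φ‖² ≤ C'·(‖λφ − Tφ‖² + ‖Sφ‖²) for every λ ∈ ℂ with Re λ > −β and every φ ∈ D; (b) conversely, if there exists C' > 0 such that (Re λ + β)²·‖φ‖² ≤ C'·(‖λφ − Tφ‖² + ‖Sφ‖²) for every λ ∈ ℂ with Re λ > −β and every φ ∈ D, then for every β₁ ∈ (0,β) there exists C > 0 such that ‖φ‖² ≤ C·(‖λφ − Tφ‖² + ‖Sφ‖²) for every λ ∈ ℂ with Re λ > −β₁ and every φ ∈ D. -/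
/-!
Write `Re λ + β = (Re λ - ω) + (ω + β)`. For `Re λ > ω` the resolvent estimate controls the first
summand times `‖φ‖`, and the unquantified inequality controls the second, a constant, times `‖φ‖`.
For `-β < Re λ ≤ ω` the whole weight lies between `0` and `ω + β`, so the unquantified inequality
suffices. Conversely, on `Re λ > -β₁` the weight is at least `β - β₁ > 0` and can be divided out.
-/

section

variable {𝕜 H U : Type*} [RCLike 𝕜] [SeminormedAddCommGroup H] [NormedSpace 𝕜 H]
  [SeminormedAddCommGroup U] {D : Set H} {T : D → H} {S : D → U} {β β₁ ω C C₀ : ℝ}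

/-- The squared norm of `(lam φ - T φ, S φ)` in the `ℓ²` sum of `H` and `U` (not the sup norm of
`H × U`), the right-hand side of Hautus-type inequalities for the pair `(T, S)`. -/
def hautusForm (T : D → H) (S : D → U) (lam : 𝕜) (φ : D) : ℝ :=
  ‖lam • (φ : H) - T φ‖ ^ 2 + ‖S φ‖ ^ 2

variable (𝕜)

/-- The resolvent estimate of a semigroup generator with growth bound `ω`, written without inverses
so that it makes sense for a map `T` whose resolvent need not exist. -/
def ResolventBound (T : D → H) (ω C₀ : ℝ) : Prop :=
  ∀ lam : 𝕜, ω < RCLike.re lam → ∀ φ : D,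
    (RCLike.re lam - ω) * ‖(φ : H)‖ ≤ C₀ * ‖lam • (φ : H) - T φ‖

/-- The unquantified form of the inequality (HESI)_β, with constant `C`. -/
def UnquantifiedHESI (T : D → H) (S : D → U) (β C : ℝ) : Prop :=
  ∀ lam : 𝕜, -β < RCLike.re lam → ∀ φ : D, ‖(φ : H)‖ ^ 2 ≤ C * hautusForm T S lam φ

/-- The quantified form of the inequality (HESI)_β, with constant `C`: the left-hand side carries
the squared distance of `lam` to the line `Re = -β`. -/
def QuantifiedHESI (T : D → H) (S : D → U) (β C : ℝ) : Prop :=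
  ∀ lam : 𝕜, -β < RCLike.re lam → ∀ φ : D,
    (RCLike.re lam + β) ^ 2 * ‖(φ : H)‖ ^ 2 ≤ C * hautusForm T S lam φ

variable {𝕜}

theorem hautusForm_nonneg (lam : 𝕜) (φ : D) : 0 ≤ hautusForm T S lam φ :=
  add_nonneg (sq_nonneg _) (sq_nonneg _)

theorem ResolventBound.sq_mul_sq_norm_le_hautusForm (hres : ResolventBound 𝕜 T ω C₀) {lam : 𝕜}
    (hlam : ω < RCLike.re lam) (φ : D) :
    (RCLike.re lam - ω) ^ 2 * ‖(φ : H)‖ ^ 2 ≤ C₀ ^ 2 * hautusForm T S lam φ :=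
  calc (RCLike.re lam - ω) ^ 2 * ‖(φ : H)‖ ^ 2
      = ((RCLike.re lam - ω) * ‖(φ : H)‖) ^ 2 := (mul_pow _ _ _).symm
    _ ≤ (C₀ * ‖lam • (φ : H) - T φ‖) ^ 2 :=
        pow_le_pow_left₀ (mul_nonneg (sub_nonneg.2 hlam.le) (norm_nonneg _)) (hres lam hlam φ) 2
    _ = C₀ ^ 2 * ‖lam • (φ : H) - T φ‖ ^ 2 := mul_pow _ _ _
    _ ≤ C₀ ^ 2 * hautusForm T S lam φ :=
        mul_le_mul_of_nonneg_left (le_add_of_nonneg_right (sq_nonneg _)) (sq_nonneg _)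

theorem UnquantifiedHESI.quantifiedHESI (h : UnquantifiedHESI 𝕜 T S β C)
    (hres : ResolventBound 𝕜 T ω C₀) :
    QuantifiedHESI 𝕜 T S β (2 * (C₀ ^ 2 + (ω + β) ^ 2 * C)) := by
  intro lam hlam φ
  have const_bound : (ω + β) ^ 2 * ‖(φ : H)‖ ^ 2 ≤ (ω + β) ^ 2 * (C * hautusForm T S lam φ) :=
    mul_le_mul_of_nonneg_left (h lam hlam φ) (sq_nonneg _)
  rcases lt_or_ge ω (RCLike.re lam) with right_of_ω | left_of_ω
  · have resolvent_bound :
        (RCLike.re lam - ω) ^ 2 * ‖(φ : H)‖ ^ 2 ≤ C₀ ^ 2 * hautusForm T S lam φ :=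
      hres.sq_mul_sq_norm_le_hautusForm right_of_ω φ
    calc (RCLike.re lam + β) ^ 2 * ‖(φ : H)‖ ^ 2
        = ((RCLike.re lam - ω) + (ω + β)) ^ 2 * ‖(φ : H)‖ ^ 2 := by ring
      _ ≤ 2 * ((RCLike.re lam - ω) ^ 2 + (ω + β) ^ 2) * ‖(φ : H)‖ ^ 2 :=
          mul_le_mul_of_nonneg_right add_sq_le (sq_nonneg _)
      _ = 2 * ((RCLike.re lam - ω) ^ 2 * ‖(φ : H)‖ ^ 2 + (ω + β) ^ 2 * ‖(φ : H)‖ ^ 2) := by ring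
      _ ≤ 2 * (C₀ ^ 2 * hautusForm T S lam φ + (ω + β) ^ 2 * (C * hautusForm T S lam φ)) :=
          mul_le_mul_of_nonneg_left (add_le_add resolvent_bound const_bound) zero_le_two
      _ = 2 * (C₀ ^ 2 + (ω + β) ^ 2 * C) * hautusForm T S lam φ := by ring
  · have weight_le : (RCLike.re lam + β) ^ 2 ≤ (ω + β) ^ 2 :=
      pow_le_pow_left₀ (by linarith) (by linarith) 2
    have weighted_bound :
        (RCLike.re lam + β) ^ 2 * ‖(φ : H)‖ ^ 2 ≤ (ω + β) ^ 2 * (C * hautusForm T S lam φ) :=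
      (mul_le_mul_of_nonneg_right weight_le (sq_nonneg _)).trans const_bound
    have lhs_nonneg : 0 ≤ (RCLike.re lam + β) ^ 2 * ‖(φ : H)‖ ^ 2 := by positivity
    have resolvent_nonneg : 0 ≤ C₀ ^ 2 * hautusForm T S lam φ :=
      mul_nonneg (sq_nonneg _) (hautusForm_nonneg lam φ)
    linarith

theorem QuantifiedHESI.unquantifiedHESI (h : QuantifiedHESI 𝕜 T S β C) (hβ₁ : β₁ < β) :
    UnquantifiedHESI 𝕜 T S β₁ (C / (β - β₁) ^ 2) := by
  intro lam hlam φ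
  have gap_pos : 0 < β - β₁ := sub_pos.2 hβ₁
  have gap_le : (β - β₁) ^ 2 ≤ (RCLike.re lam + β) ^ 2 :=
    pow_le_pow_left₀ gap_pos.le (by linarith) 2
  rw [div_mul_eq_mul_div, le_div_iff₀' (by positivity)]
  calc (β - β₁) ^ 2 * ‖(φ : H)‖ ^ 2
      ≤ (RCLike.re lam + β) ^ 2 * ‖(φ : H)‖ ^ 2 := mul_le_mul_of_nonneg_right gap_le (sq_nonneg _)
    _ ≤ C * hautusForm T S lam φ := h lam (by linarith) φ

theorem HESI_quantified_iff_unquantified_general (hC₀ : 0 < C₀)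
    (hres : ResolventBound 𝕜 T ω C₀) :
    ((∃ C : ℝ, 0 < C ∧ UnquantifiedHESI 𝕜 T S β C) →
      ∃ C' : ℝ, 0 < C' ∧ QuantifiedHESI 𝕜 T S β C') ∧
    ((∃ C' : ℝ, 0 < C' ∧ QuantifiedHESI 𝕜 T S β C') →
      ∀ β₁ : ℝ, β₁ < β → ∃ C : ℝ, 0 < C ∧ UnquantifiedHESI 𝕜 T S β₁ C) := by
  constructor
  · rintro ⟨C, hC, h⟩
    exact ⟨2 * (C₀ ^ 2 + (ω + β) ^ 2 * C), by positivity, h.quantifiedHESI hres⟩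
  · rintro ⟨C', hC', h⟩ β₁ hβ₁
    exact ⟨C' / (β - β₁) ^ 2, div_pos hC' (pow_pos (sub_pos.2 hβ₁) 2), h.unquantifiedHESI hβ₁⟩

end

/-- Equivalence of the two forms of the (HESI)_β inequality (Proposition in the Appendix):
under the resolvent-type estimate `(Re λ - ω)‖φ‖ ≤ C₀‖λφ - Tφ‖` for `Re λ > ω`,
(a) the unquantified inequality on `Re λ > -β` implies the quantified one on `Re λ > -β`,
and (b) conversely the quantified inequality on `Re λ > -β` implies the unquantified one
on `Re λ > -β₁` for every `0 < β₁ < β`. -/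
theorem HESI_quantified_iff_unquantified
    {H U : Type*}
    [NormedAddCommGroup H] [InnerProductSpace ℂ H]
    [NormedAddCommGroup U] [InnerProductSpace ℂ U]
    (D : Submodule ℂ H) (T : D →ₗ[ℂ] H) (S : D →ₗ[ℂ] U) (β : ℝ) (hβ : 0 < β)
    (hres : ∃ ω : ℝ, 0 < ω ∧ ∃ C₀ : ℝ, 0 < C₀ ∧ ∀ lam : ℂ, ω < lam.re → ∀ φ : D,
      (lam.re - ω) * ‖(φ : H)‖ ≤ C₀ * ‖lam • (φ : H) - T φ‖) :
    ((∃ C : ℝ, 0 < C ∧ ∀ lam : ℂ, -β < lam.re → ∀ φ : D,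
        ‖(φ : H)‖ ^ 2 ≤ C * (‖lam • (φ : H) - T φ‖ ^ 2 + ‖S φ‖ ^ 2)) →
      ∃ C' : ℝ, 0 < C' ∧ ∀ lam : ℂ, -β < lam.re → ∀ φ : D,
        (lam.re + β) ^ 2 * ‖(φ : H)‖ ^ 2
          ≤ C' * (‖lam • (φ : H) - T φ‖ ^ 2 + ‖S φ‖ ^ 2)) ∧
    ((∃ C' : ℝ, 0 < C' ∧ ∀ lam : ℂ, -β < lam.re → ∀ φ : D,
        (lam.re + β) ^ 2 * ‖(φ : H)‖ ^ 2
          ≤ C' * (‖lam • (φ : H) - T φ‖ ^ 2 + ‖S φ‖ ^ 2)) →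
      ∀ β₁ : ℝ, 0 < β₁ → β₁ < β →
        ∃ C : ℝ, 0 < C ∧ ∀ lam : ℂ, -β₁ < lam.re → ∀ φ : D,
          ‖(φ : H)‖ ^ 2 ≤ C * (‖lam • (φ : H) - T φ‖ ^ 2 + ‖S φ‖ ^ 2)) := by
  obtain ⟨ω, -, C₀, hC₀, h⟩ := hres
  exact (HESI_quantified_iff_unquantified_general (D := (D : Set H)) hC₀ h).imp_right
    fun unquantify hC' β₁ _ => unquantify hC' β₁
end

section
/- Let N be a positive integer, E ⊆ ℝ^N a thick measurable set, a > 0, b ∈ ℝ, and β > 0. Then there exists C > 0 such that for every λ ∈ ℂ with Re λ > −β and every Schwartz function φ : ℝ^N → ℂ, ∫_{ℝ^N} |φ(x)|² dx ≤ C·( ∫_{ℝ^N} |λφ(x) − (a − i b)·Δφ(x)|² dx + ∫_E |φ(x)|² dx ), where Δφ(x) = Σ_{j=1}^N ∂²φ/∂x_j²(x) is the Laplacian of φ. -/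
open MeasureTheory Real

/-!
Let `R` be so large that `|λ + (a - ib)(2π|ξ|)²| ≥ 1` whenever `Re λ ≥ -β` and `|ξ| ≥ R`. By
Plancherel, the part of `φ` with frequencies above `R` is controlled by `λφ - (a - ib)Δφ`, so it
remains to bound a band-limited function by its restriction to `E` (Logvinenko–Sereda).

That bound is first proved locally, for band-limited functions carrying a fixed proportion of their
mass on a ball, by compactness: if it failed, a weak limit would be a nonzero function with Fourier
transform supported in a ball which vanishes on a set of positive measure, although it is analytic
along every line. To globalise, multiply by translates of one fixed `θ` with compactly supported
Fourier transform and integrate the local bounds over all translates; the mass of `θ` outside a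
large ball is absorbed.
-/

section

open Filter Metric Set
open scoped ENNReal FourierTransform InnerProductSpace Laplacian NNReal SchwartzMap Topology

theorem eq_zero_of_analyticOnNhd_of_volume_ne_zero {F : Type*} [NormedAddCommGroup F]
    [NormedSpace ℝ F] {f : ℝ → F} (hf : AnalyticOnNhd ℝ f univ)
    (hZ : volume {t | f t = 0} ≠ 0) : f = 0 := by
  rcases hf.eqOn_zero_or_eventually_ne_zero_of_preconnected isPreconnected_univ with h | h
  · exact funext fun t ↦ h (mem_univ t)
  · have hae := ae_restrict_le_codiscreteWithin (μ := volume) MeasurableSet.univ h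
    rw [Measure.restrict_univ] at hae
    exact absurd (by simpa [mem_ae_iff, compl_ofPred] using hae) hZ

section UniqueContinuation

variable {V : Type*} [NormedAddCommGroup V] [NormedSpace ℝ V] [FiniteDimensional ℝ V]
  [MeasurableSpace V] [BorelSpace V] (μ : Measure V) [μ.IsAddHaarMeasure]

theorem exists_volume_line_inter_ne_zero {Z : Set V} (hZm : MeasurableSet Z) (hZ : μ Z ≠ 0)
    (x : V) : ∃ v : V, volume {t : ℝ | x + t • v ∈ Z} ≠ 0 := by
  by_contra! hlines
  have hmeas : MeasurableSet {p : V × ℝ | x + p.2 • p.1 ∈ Z} := by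
    have hcont : Continuous fun p : V × ℝ ↦ x + p.2 • p.1 := by fun_prop
    exact hcont.measurable hZm
  have hdilate (t : ℝ) (ht : t ≠ 0) : μ {v | x + t • v ∈ Z} ≠ 0 := by
    have hpre : {v | x + t • v ∈ Z} = (t • ·) ⁻¹' ((x + ·) ⁻¹' Z) := rfl
    rw [hpre, Measure.addHaar_preimage_smul μ ht, measure_preimage_add]
    simp [ht, hZ]
  have hslices : ∀ᵐ t : ℝ, μ {v | x + t • v ∈ Z} = 0 := by
    refine (lintegral_eq_zero_iff (measurable_measure_prodMk_right hmeas)).1 ?_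
    rw [← Measure.prod_apply_symm hmeas]
    exact (Measure.measure_prod_null hmeas).2 (Eventually.of_forall hlines)
  obtain ⟨t, ht, ht0⟩ := (hslices.and (Measure.ae_ne volume 0)).exists
  exact hdilate t ht0 ht

theorem eq_zero_of_analytic_on_lines {F : Type*} [NormedAddCommGroup F] [NormedSpace ℝ F]
    {f : V → F} (hfm : MeasurableSet {x | f x = 0})
    (hf : ∀ x v, AnalyticOnNhd ℝ (fun t : ℝ ↦ f (x + t • v)) univ)
    (hZ : μ {x | f x = 0} ≠ 0) : f = 0 := by
  ext x
  obtain ⟨v, hv⟩ := exists_volume_line_inter_ne_zero μ hfm hZ x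
  simpa using congrFun (eq_zero_of_analyticOnNhd_of_volume_ne_zero (hf x v) hv) 0

end UniqueContinuation

section FourierIntegral

theorem differentiable_integral_cexp_mul {α : Type*} [MeasurableSpace α] {μ : Measure α}
    {u g : α → ℂ} (hu : AEStronglyMeasurable u μ) {M : ℝ} (hM : ∀ᵐ a ∂μ, ‖u a‖ ≤ M)
    (hg : Integrable g μ) : Differentiable ℂ fun z : ℂ ↦ ∫ a, Complex.exp (z * u a) * g a ∂μ := by
  intro z₀
  have hmeas (z : ℂ) : AEStronglyMeasurable (fun a ↦ Complex.exp (z * u a) * g a) μ :=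
    (Complex.continuous_exp.comp_aestronglyMeasurable (hu.const_mul z)).mul hg.1
  have hexp {z : ℂ} {K : ℝ} (hz : ‖z‖ ≤ K) {a : α} (ha : ‖u a‖ ≤ M) :
      ‖Complex.exp (z * u a)‖ ≤ Real.exp (K * M) :=
    (Complex.norm_exp_le_exp_norm _).trans <| Real.exp_le_exp.2 <| by
      rw [norm_mul]
      exact mul_le_mul hz ha (norm_nonneg _) ((norm_nonneg z).trans hz)
  refine (hasDerivAt_integral_of_dominated_loc_of_deriv_le
    (F' := fun z a ↦ Complex.exp (z * u a) * u a * g a)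
    (bound := fun a ↦ Real.exp ((‖z₀‖ + 1) * M) * M * ‖g a‖) (ball_mem_nhds z₀ one_pos)
    (Eventually.of_forall hmeas) ?_ ?_ ?_ (hg.norm.const_mul _) ?_).2.differentiableAt
  · refine hg.bdd_mul (c := Real.exp (‖z₀‖ * M))
      (Complex.continuous_exp.comp_aestronglyMeasurable (hu.const_mul z₀)) ?_
    filter_upwards [hM] with a ha using hexp le_rfl ha
  · exact ((Complex.continuous_exp.comp_aestronglyMeasurable (hu.const_mul z₀)).mul hu).mul hg.1
  · filter_upwards [hM] with a ha z hz
    have hz' : ‖z‖ ≤ ‖z₀‖ + 1 := by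
      linarith [norm_le_norm_add_norm_sub' z z₀, mem_ball_iff_norm.1 hz]
    rw [norm_mul, norm_mul]
    gcongr
    exact hexp hz' ha
  · refine Eventually.of_forall fun a z _ ↦ ?_
    simpa using (((hasDerivAt_id z).mul_const (u a)).cexp).mul_const (g a)

theorem analyticOnNhd_fourierIntegral_line {V W : Type*} [AddCommGroup V] [Module ℝ V]
    [TopologicalSpace V] [MeasurableSpace V] [BorelSpace V] {μ : Measure V} [AddCommGroup W]
    [Module ℝ W] [TopologicalSpace W] {L : V →ₗ[ℝ] W →ₗ[ℝ] ℝ}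
    (hL : Continuous fun p : V × W ↦ L p.1 p.2) {v : W} {M : ℝ} (hM : ∀ᵐ ξ ∂μ, |L ξ v| ≤ M)
    {h : V → ℂ} (hh : Integrable h μ) (x : W) :
    AnalyticOnNhd ℝ (fun t : ℝ ↦ VectorFourier.fourierIntegral 𝐞 μ L h (x + t • v)) univ := by
  have hLv : Continuous fun ξ ↦ L ξ v := hL.comp (.prodMk_left v)
  have hentire := differentiable_integral_cexp_mul (M := 2 * π * M)
    (u := fun ξ ↦ (-(2 * π * L ξ v) : ℝ) * Complex.I)
    ((Complex.continuous_ofReal.comp (by fun_prop)).mul continuous_const).aestronglyMeasurable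
    (by filter_upwards [hM] with ξ hξ
        simpa [abs_of_pos pi_pos] using mul_le_mul_of_nonneg_left hξ two_pi_pos.le)
    ((VectorFourier.fourierIntegral_convergent_iff continuous_fourierChar hL x).2 hh)
  intro t _
  convert ((hentire.analyticAt t).restrictScalars (𝕜 := ℝ)).comp (Complex.ofRealCLM.analyticAt t)
    using 2 with s
  refine integral_congr_ae (Eventually.of_forall fun ξ ↦ ?_)
  simp only [Circle.smul_def, fourierChar_apply, smul_eq_mul, ← mul_assoc, ← Complex.exp_add,
    map_add, map_smul]
  congr 2
  push_cast
  ring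

end FourierIntegral

theorem exists_fourierIntegral_eq_inner {V W : Type*} [AddCommGroup V] [Module ℝ V]
    [TopologicalSpace V] [MeasurableSpace V] [BorelSpace V]
    (μ : Measure V) [IsFiniteMeasure μ]
    [AddCommGroup W] [Module ℝ W] [TopologicalSpace W] {L : V →ₗ[ℝ] W →ₗ[ℝ] ℝ}
    (hL : Continuous fun p : V × W ↦ L p.1 p.2) :
    ∃ K : ℝ, ∃ e : W → Lp ℂ 2 μ, ∀ w, ‖e w‖ ≤ K ∧
      ∀ u : Lp ℂ 2 μ, VectorFourier.fourierIntegral 𝐞 μ L u w = ⟪e w, u⟫_ℂ := by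
  have hchar (w : W) : MemLp (fun ξ ↦ ((𝐞 (L ξ w) : Circle) : ℂ)) 2 μ := by
    have hLw : Continuous fun ξ ↦ L ξ w := hL.comp (.prodMk_left w)
    exact .of_bound (by fun_prop) 1 (Eventually.of_forall fun ξ ↦ (Circle.norm_coe _).le)
  refine ⟨measureUnivNNReal μ ^ (2⁻¹ : ℝ) * 1, fun w ↦ (hchar w).toLp, fun w ↦ ⟨?_, fun u ↦ ?_⟩⟩
  · refine Lp.norm_le_of_ae_bound zero_le_one ?_
    filter_upwards [(hchar w).coeFn_toLp] with ξ hξ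
    rw [hξ, Circle.norm_coe]
  · rw [L2.inner_def]
    refine integral_congr_ae ?_
    filter_upwards [(hchar w).coeFn_toLp] with ξ hξ
    rw [hξ, AddChar.map_neg_eq_inv, Circle.smul_def, Circle.coe_inv_eq_conj, RCLike.inner_apply,
      smul_eq_mul, mul_comm]

theorem exists_subseq_tendsto_inner {𝕜 H : Type*} [RCLike 𝕜] [NormedAddCommGroup H]
    [InnerProductSpace 𝕜 H] [CompleteSpace H] [TopologicalSpace.SeparableSpace H] {u : ℕ → H}
    {r : ℝ} (hu : ∀ n, ‖u n‖ ≤ r) : ∃ h : H, ∃ σ : ℕ → ℕ, StrictMono σ ∧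
      ∀ e : H, Tendsto (fun n ↦ ⟪e, u (σ n)⟫_𝕜) atTop (𝓝 ⟪e, h⟫_𝕜) := by
  have hball (n : ℕ) : WeakDual.toStrongDual.symm (InnerProductSpace.toDual 𝕜 H (u n)) ∈
      WeakDual.toStrongDual ⁻¹' closedBall (0 : StrongDual 𝕜 H) r := by
    simpa using hu n
  obtain ⟨T, -, σ, hσ, hT⟩ := WeakDual.isSeqCompact_closedBall 𝕜 H 0 r hball
  refine ⟨(InnerProductSpace.toDual 𝕜 H).symm (WeakDual.toStrongDual T), σ, hσ, fun e ↦ ?_⟩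
  have hconj := (RCLike.continuous_conj.tendsto _).comp
    (((WeakDual.eval_continuous e).tendsto T).comp hT)
  have hTe : T e = ⟪(InnerProductSpace.toDual 𝕜 H).symm (WeakDual.toStrongDual T), e⟫_𝕜 := by
    rw [InnerProductSpace.toDual_symm_apply, WeakDual.toStrongDual_apply]
  rw [hTe, inner_conj_symm] at hconj
  exact hconj.congr fun n ↦ inner_conj_symm _ _

theorem eLpNorm_two_sq {α F : Type*} [MeasurableSpace α] [NormedAddCommGroup F] (μ : Measure α)
    (f : α → F) : eLpNorm f 2 μ ^ 2 = ∫⁻ a, ‖f a‖ₑ ^ 2 ∂μ := by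
  simpa using eLpNorm_nnreal_pow_eq_lintegral (f := f) (μ := μ) (p := 2) two_ne_zero

theorem continuous_neg_innerₗ (V : Type*) [NormedAddCommGroup V] [InnerProductSpace ℝ V] :
    Continuous fun p : V × V ↦ (-innerₗ V) p.1 p.2 := by
  simpa only [LinearMap.neg_apply, innerₗ_apply_apply] using (continuous_inner (𝕜 := ℝ)).fun_neg

section BandLimited

variable {V : Type*} [NormedAddCommGroup V] [InnerProductSpace ℝ V] [FiniteDimensional ℝ V]
  [MeasurableSpace V] [BorelSpace V]

theorem lintegral_enorm_sq_fourier (f : 𝓢(V, ℂ)) :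
    ∫⁻ ξ, ‖𝓕 f ξ‖ₑ ^ 2 = ∫⁻ x, ‖f x‖ₑ ^ 2 := by
  have h := congrArg ENNReal.ofReal f.norm_fourier_toL2_eq
  rw [ofReal_norm, ofReal_norm, SchwartzMap.toLp, SchwartzMap.toLp, Lp.enorm_toLp,
    Lp.enorm_toLp] at h
  rw [← eLpNorm_two_sq, ← eLpNorm_two_sq, h]

/-- The inverse Fourier integral of `h` over the ball of radius `R`; for `h` in `L²` of the ball
these are the limits of band-limited functions. -/
noncomputable def ballFourierInv (R : ℝ) (h : V → ℂ) : V → ℂ :=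
  VectorFourier.fourierIntegral 𝐞 (volume.restrict (closedBall 0 R)) (-innerₗ V) h

theorem continuous_ballFourierInv {R : ℝ} {h : V → ℂ} (hh : IntegrableOn h (closedBall 0 R)) :
    Continuous (ballFourierInv R h) :=
  VectorFourier.fourierIntegral_continuous continuous_fourierChar (continuous_neg_innerₗ V) hh

theorem analyticOnNhd_ballFourierInv_line {R : ℝ} {h : V → ℂ}
    (hh : IntegrableOn h (closedBall 0 R)) (x v : V) :
    AnalyticOnNhd ℝ (fun t : ℝ ↦ ballFourierInv R h (x + t • v)) univ := by
  refine analyticOnNhd_fourierIntegral_line (continuous_neg_innerₗ V) (M := R * ‖v‖) ?_ hh x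
  filter_upwards [ae_restrict_mem isClosed_closedBall.measurableSet] with ξ hξ
  simpa using (abs_real_inner_le_norm ξ v).trans
    (mul_le_mul_of_nonneg_right (mem_closedBall_zero_iff.1 hξ) (norm_nonneg v))

/-- The Fourier transform of `f` vanishes outside the closed ball of radius `R`. -/
def IsBandLimited (R : ℝ) (f : 𝓢(V, ℂ)) : Prop := ∀ ξ, R < ‖ξ‖ → 𝓕 f ξ = 0

namespace IsBandLimited

variable {R : ℝ}

theorem eq_ballFourierInv {f : 𝓢(V, ℂ)} (hf : IsBandLimited R f) (x : V) :
    f x = ballFourierInv R (𝓕 f : 𝓢(V, ℂ)) x := by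
  have hinv : f x = 𝓕⁻ ⇑(𝓕 f : 𝓢(V, ℂ)) x := by
    rw [← SchwartzMap.fourierInv_coe, FourierTransform.fourierInv_fourier_eq]
  rw [hinv, ballFourierInv, VectorFourier.fourierIntegral,
    setIntegral_eq_integral_of_forall_compl_eq_zero]
  · simp [Real.fourierInv_eq]
  · intro ξ hξ
    rw [hf ξ (by simpa using hξ), smul_zero]

theorem const_smul {f : 𝓢(V, ℂ)} (hf : IsBandLimited R f) (c : ℂ) : IsBandLimited R (c • f) :=
  fun ξ hξ ↦ by rw [FourierTransform.fourier_smul, smul_apply, hf ξ hξ, smul_zero]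

theorem compSubConst {f : 𝓢(V, ℂ)} (hf : IsBandLimited R f) (v : V) :
    IsBandLimited R (f.compSubConstCLM ℂ v) := fun ξ hξ ↦ by
  have hshift := congrFun (VectorFourier.fourierIntegral_comp_add_right fourierChar
    (volume : Measure V) (innerₗ V) f (-v)) ξ
  have hfξ : VectorFourier.fourierIntegral 𝐞 volume (innerₗ V) f ξ = 0 := hf ξ hξ
  rw [hfξ, smul_zero] at hshift
  rw [SchwartzMap.fourier_coe]
  simpa [Real.fourier_eq, VectorFourier.fourierIntegral, sub_eq_add_neg] using hshift

end IsBandLimited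

theorem isBandLimited_iff_fourierInv {R : ℝ} {f : 𝓢(V, ℂ)} :
    IsBandLimited R f ↔ ∀ ξ, R < ‖ξ‖ → 𝓕⁻ f ξ = 0 := by
  have hinv (ξ : V) : 𝓕⁻ f ξ = 𝓕 f (-ξ) := by
    rw [SchwartzMap.fourierInv_coe, SchwartzMap.fourier_coe, Real.fourierInv_eq_fourier_neg]
  simp_rw [hinv]
  exact (Equiv.neg V).forall_congr fun {ξ} ↦ by simp

namespace IsBandLimited

variable {R : ℝ}

theorem pairing_mul {S : ℝ} {f g : 𝓢(V, ℂ)} (hf : IsBandLimited R f) (hg : IsBandLimited S g) :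
    IsBandLimited (R + S) (SchwartzMap.pairing (ContinuousLinearMap.mul ℂ ℂ) f g) := by
  rw [isBandLimited_iff_fourierInv] at hf hg ⊢
  intro ξ hξ
  have hconv : 𝓕⁻ (SchwartzMap.pairing (ContinuousLinearMap.mul ℂ ℂ) f g) =
      SchwartzMap.convolution (ContinuousLinearMap.mul ℂ ℂ) (𝓕⁻ f) (𝓕⁻ g) := by
    have h := SchwartzMap.fourier_convolution (ContinuousLinearMap.mul ℂ ℂ)
      (𝓕⁻ f : 𝓢(V, ℂ)) (𝓕⁻ g : 𝓢(V, ℂ))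
    rw [FourierTransform.fourier_fourierInv_eq, FourierTransform.fourier_fourierInv_eq] at h
    rw [← h, FourierTransform.fourierInv_fourier_eq]
  rw [hconv, SchwartzMap.convolution_apply, convolution]
  refine integral_eq_zero_of_ae (Eventually.of_forall fun η ↦ ?_)
  rcases lt_or_ge R ‖η‖ with hη | hη
  · simp [hf η hη]
  · have hξη : S < ‖ξ - η‖ := by linarith [norm_sub_norm_le ξ η]
    simp [hg _ hξη]

theorem exists_Lp_eq_ballFourierInv {f : 𝓢(V, ℂ)} (hf : IsBandLimited R f) :
    ∃ u : Lp ℂ 2 (volume.restrict (closedBall (0 : V) R)),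
      ‖u‖ₑ ^ 2 ≤ ∫⁻ x, ‖f x‖ₑ ^ 2 ∧ ∀ x, f x = ballFourierInv R u x := by
  have hmem : MemLp (𝓕 f : 𝓢(V, ℂ)) 2 (volume.restrict (closedBall 0 R)) :=
    ((𝓕 f : 𝓢(V, ℂ)).memLp 2).restrict _
  refine ⟨hmem.toLp, ?_, fun x ↦ ?_⟩
  · rw [Lp.enorm_toLp, eLpNorm_two_sq, ← lintegral_enorm_sq_fourier]
    exact setLIntegral_le_lintegral _ _
  · rw [hf.eq_ballFourierInv]
    refine integral_congr_ae ?_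
    filter_upwards [hmem.coeFn_toLp] with ξ hξ
    rw [hξ]

theorem exists_enorm_sq_le (R : ℝ) : ∃ K : ℝ≥0, ∀ f : 𝓢(V, ℂ), IsBandLimited R f → ∀ x,
    ‖f x‖ₑ ^ 2 ≤ K * ∫⁻ y, ‖f y‖ₑ ^ 2 := by
  have : IsFiniteMeasure (volume.restrict (closedBall (0 : V) R)) :=
    isFiniteMeasure_restrict.2 measure_closedBall_lt_top.ne
  obtain ⟨K, e, he⟩ := exists_fourierIntegral_eq_inner
    (volume.restrict (closedBall (0 : V) R)) (continuous_neg_innerₗ V)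
  refine ⟨K.toNNReal ^ 2, fun f hf x ↦ ?_⟩
  obtain ⟨u, hu, hfu⟩ := hf.exists_Lp_eq_ballFourierInv
  have hCS : ‖f x‖ₑ ≤ K.toNNReal * ‖u‖ₑ := by
    rw [hfu, ballFourierInv, (he x).2]
    have hex : ‖e x‖₊ ≤ K.toNNReal := NNReal.le_toNNReal_of_coe_le (he x).1
    exact ENNReal.coe_le_coe.2
      ((nnnorm_inner_le_nnnorm (𝕜 := ℂ) (e x) u).trans (mul_le_mul_left hex _))
  calc ‖f x‖ₑ ^ 2 ≤ (K.toNNReal * ‖u‖ₑ) ^ 2 := by gcongr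
    _ = (K.toNNReal ^ 2 : ℝ≥0) * ‖u‖ₑ ^ 2 := by rw [mul_pow, ENNReal.coe_pow]
    _ ≤ _ := by gcongr

theorem exists_subseq_tendsto {g : ℕ → 𝓢(V, ℂ)} (hg : ∀ n, IsBandLimited R (g n))
    (hbd : ∀ n, ∫⁻ x, ‖g n x‖ₑ ^ 2 ≤ 1) :
    ∃ h : V → ℂ, IntegrableOn h (closedBall 0 R) ∧ ∃ σ : ℕ → ℕ, StrictMono σ ∧
      ∀ x, Tendsto (fun n ↦ g (σ n) x) atTop (𝓝 (ballFourierInv R h x)) := by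
  have : IsFiniteMeasure (volume.restrict (closedBall (0 : V) R)) :=
    isFiniteMeasure_restrict.2 measure_closedBall_lt_top.ne
  have : Fact ((2 : ℝ≥0∞) ≠ ∞) := ⟨ENNReal.ofNat_ne_top⟩
  obtain ⟨_, e, he⟩ := exists_fourierIntegral_eq_inner
    (volume.restrict (closedBall (0 : V) R)) (continuous_neg_innerₗ V)
  choose u hu hgu using fun n ↦ (hg n).exists_Lp_eq_ballFourierInv
  have hu1 (n : ℕ) : ‖u n‖ ≤ 1 := by
    have hle : ‖u n‖ₑ ≤ 1 := (pow_le_one_iff two_ne_zero).1 ((hu n).trans (hbd n))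
    exact ENNReal.coe_le_one_iff.1 hle
  obtain ⟨h, σ, hσ, hlim⟩ := exists_subseq_tendsto_inner (𝕜 := ℂ) hu1
  refine ⟨h, (Lp.memLp h).integrable one_le_two, σ, hσ, fun x ↦ ?_⟩
  simpa only [hgu, ballFourierInv, (he x).2] using hlim (e x)

end IsBandLimited

end BandLimited

theorem exists_pos_forall_le_setLIntegral {α : Type*} [MeasurableSpace α] {ν : Measure α}
    [IsFiniteMeasure ν] {w : α → ℝ≥0∞} (hw : Measurable w) (hw0 : ∀ᵐ a ∂ν, w a ≠ 0)
    (hwtop : ∀ᵐ a ∂ν, w a ≠ ∞) {κ : ℝ≥0∞} (hκ : κ ≠ 0) :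
    ∃ c : ℝ≥0∞, c ≠ 0 ∧ ∀ s, κ ≤ ν s → c ≤ ∫⁻ a in s, w a ∂ν := by
  have hinv : (ν.withDensity w).withDensity w⁻¹ = ν := withDensity_inv_same hw hw0 hwtop
  have hfin : ∫⁻ a, w⁻¹ a ∂ν.withDensity w ≠ ∞ := by
    rw [← setLIntegral_univ, ← withDensity_apply _ .univ, hinv]
    exact measure_ne_top _ _
  obtain ⟨c, hc, hsmall⟩ := exists_pos_setLIntegral_lt_of_measure_lt hfin hκ
  refine ⟨c, hc.ne', fun s hs ↦ ?_⟩
  by_contra! hlt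
  have := hsmall s (by rwa [withDensity_apply' w s])
  rw [← withDensity_apply', hinv] at this
  exact this.not_ge hs

theorem enorm_add_sq_le {F : Type*} [NormedAddCommGroup F] (u v : F) :
    ‖u + v‖ₑ ^ 2 ≤ 2 * ‖u‖ₑ ^ 2 + 2 * ‖v‖ₑ ^ 2 := by
  have h : ‖u + v‖₊ ^ 2 ≤ 2 * ‖u‖₊ ^ 2 + 2 * ‖v‖₊ ^ 2 :=
    calc ‖u + v‖₊ ^ 2 ≤ (‖u‖₊ + ‖v‖₊) ^ 2 := by gcongr; exact nnnorm_add_le u v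
      _ ≤ 2 * (‖u‖₊ ^ 2 + ‖v‖₊ ^ 2) := add_sq_le
      _ = _ := mul_add _ _ _
  exact ENNReal.coe_le_coe.2 h

theorem lintegral_enorm_sq_le_sub {α F : Type*} [MeasurableSpace α] [NormedAddCommGroup F]
    (μ : Measure α) (u : α → F) {v : α → F} (hv : AEStronglyMeasurable v μ) :
    ∫⁻ a, ‖u a‖ₑ ^ 2 ∂μ ≤ 2 * ∫⁻ a, ‖u a - v a‖ₑ ^ 2 ∂μ + 2 * ∫⁻ a, ‖v a‖ₑ ^ 2 ∂μ := by
  rw [← lintegral_const_mul' _ _ ENNReal.ofNat_ne_top,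
    ← lintegral_const_mul' _ _ ENNReal.ofNat_ne_top,
    ← lintegral_add_right' _ ((hv.enorm.pow_const 2).const_mul 2)]
  exact lintegral_mono fun a ↦ by simpa using enorm_add_sq_le (u a - v a) (v a)

theorem tendsto_lintegral_enorm_sq_sub {α F : Type*} [MeasurableSpace α] [NormedAddCommGroup F]
    {ν : Measure α} [IsFiniteMeasure ν] {g : ℕ → α → F} {G : α → F}
    (hg : ∀ n, AEStronglyMeasurable (g n) ν) {K : ℝ≥0∞} (hKtop : K ≠ ∞)
    (hK : ∀ n a, ‖g n a‖ₑ ^ 2 ≤ K)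
    (hlim : ∀ a, Tendsto (fun n ↦ g n a) atTop (𝓝 (G a))) :
    Tendsto (fun n ↦ ∫⁻ a, ‖g n a - G a‖ₑ ^ 2 ∂ν) atTop (𝓝 0) := by
  have hG : AEStronglyMeasurable G ν :=
    aestronglyMeasurable_of_tendsto_ae atTop hg (Eventually.of_forall hlim)
  have hsq {u : ℕ → F} {l : F} (hu : Tendsto u atTop (𝓝 l)) :
      Tendsto (fun n ↦ ‖u n‖ₑ ^ 2) atTop (𝓝 (‖l‖ₑ ^ 2)) :=
    ((ENNReal.continuous_pow 2).tendsto _).comp hu.enorm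
  have hGK (a : α) : ‖G a‖ₑ ^ 2 ≤ K := le_of_tendsto' (hsq (hlim a)) fun n ↦ hK n a
  have hbound (n : ℕ) (a : α) : ‖g n a - G a‖ₑ ^ 2 ≤ 4 * K :=
    calc ‖g n a - G a‖ₑ ^ 2 ≤ 2 * ‖g n a‖ₑ ^ 2 + 2 * ‖G a‖ₑ ^ 2 := by
          simpa [sub_eq_add_neg] using enorm_add_sq_le (g n a) (-G a)
      _ ≤ 2 * K + 2 * K := by gcongr <;> simp only [hK, hGK]
      _ = 4 * K := by ring
  have hzero (a : α) : Tendsto (fun n ↦ ‖g n a - G a‖ₑ ^ 2) atTop (𝓝 0) := by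
    simpa using hsq ((hlim a).sub_const (G a))
  simpa using tendsto_lintegral_of_dominated_convergence' (μ := ν) (fun _ ↦ 4 * K)
    (fun n ↦ ((hg n).sub hG).enorm.pow_const 2) (fun n ↦ Eventually.of_forall (hbound n))
    (by rw [lintegral_const]; finiteness) (Eventually.of_forall hzero)

section LocalCompactness

variable {V : Type*} [NormedAddCommGroup V] [InnerProductSpace ℝ V] [FiniteDimensional ℝ V]
  [MeasurableSpace V] [BorelSpace V] {R : ℝ} {κ s : ℝ≥0∞}

theorem ae_ballFourierInv_ne_zero {h : V → ℂ} (hh : IntegrableOn h (closedBall 0 R))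
    (hne : ballFourierInv R h ≠ 0) : ∀ᵐ x, ballFourierInv R h x ≠ 0 := by
  have hcont : Continuous (ballFourierInv R h) := continuous_ballFourierInv hh
  by_contra hae
  exact hne <| eq_zero_of_analytic_on_lines volume
    (isClosed_singleton.preimage hcont).measurableSet (analyticOnNhd_ballFourierInv_line hh)
    (by simpa [ae_iff] using hae)

theorem exists_pos_forall_le_setLIntegral_ballFourierInv {h : V → ℂ}
    (hh : IntegrableOn h (closedBall 0 R)) (hne : ballFourierInv R h ≠ 0) (hκ : κ ≠ 0) (ρ : ℝ) :
    ∃ c : ℝ≥0∞, c ≠ 0 ∧ ∀ F ⊆ closedBall 0 ρ, κ ≤ volume F →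
      c ≤ ∫⁻ x in F, ‖ballFourierInv R h x‖ₑ ^ 2 := by
  have : IsFiniteMeasure (volume.restrict (closedBall (0 : V) ρ)) :=
    isFiniteMeasure_restrict.2 measure_closedBall_lt_top.ne
  obtain ⟨c, hc, hle⟩ := exists_pos_forall_le_setLIntegral
    (ν := volume.restrict (closedBall (0 : V) ρ))
    ((continuous_ballFourierInv hh).enorm.measurable.pow_const 2)
    (ae_restrict_of_ae <| (ae_ballFourierInv_ne_zero hh hne).mono fun x hx ↦ by simpa using hx)
    (Eventually.of_forall fun x ↦ by finiteness) hκ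
  refine ⟨c, hc, fun F hF hκF ↦ ?_⟩
  have hres : (volume.restrict (closedBall 0 ρ)).restrict F = volume.restrict F :=
    Measure.restrict_restrict_of_subset hF
  have := hle F (by rwa [Measure.restrict_apply' isClosed_closedBall.measurableSet,
    inter_eq_self_of_subset_left hF])
  rwa [hres] at this

theorem IsBandLimited.not_tendsto_setLIntegral_zero {r ρ : ℝ} {g : ℕ → 𝓢(V, ℂ)} {F : ℕ → Set V}
    (hg : ∀ n, IsBandLimited R (g n)) (hg1 : ∀ n, ∫⁻ x, ‖g n x‖ₑ ^ 2 ≤ 1)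
    (hs : s ≠ 0) (hgs : ∀ n, s ≤ ∫⁻ x in closedBall 0 r, ‖g n x‖ₑ ^ 2)
    (hκ : κ ≠ 0) (hF : ∀ n, F n ⊆ closedBall 0 ρ) (hFκ : ∀ n, κ ≤ volume (F n)) :
    ¬ Tendsto (fun n ↦ ∫⁻ x in F n, ‖g n x‖ₑ ^ 2) atTop (𝓝 0) := by
  intro hlim0
  obtain ⟨h, hh, σ, hσ, hlim⟩ := exists_subseq_tendsto hg hg1
  obtain ⟨K, hK⟩ := exists_enorm_sq_le (V := V) R
  set G : V → ℂ := ballFourierInv R h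
  have hdiff (t : ℝ) :
      Tendsto (fun n ↦ ∫⁻ x in closedBall 0 t, ‖g (σ n) x - G x‖ₑ ^ 2) atTop (𝓝 0) := by
    have : IsFiniteMeasure (volume.restrict (closedBall (0 : V) t)) :=
      isFiniteMeasure_restrict.2 measure_closedBall_lt_top.ne
    exact tendsto_lintegral_enorm_sq_sub (fun n ↦ (g (σ n)).continuous.aestronglyMeasurable)
      ENNReal.coe_ne_top (fun n x ↦ (hK _ (hg _) x).trans (mul_le_of_le_one_right' (hg1 _))) hlim
  have hGne : G ≠ 0 := by
    intro hG
    refine hs (nonpos_iff_eq_zero.1 (ge_of_tendsto' (hdiff r) fun n ↦ ?_))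
    simpa [hG] using hgs (σ n)
  obtain ⟨c, hc, hle⟩ := exists_pos_forall_le_setLIntegral_ballFourierInv hh hGne hκ ρ
  have hsum : Tendsto (fun n ↦ 2 * (∫⁻ x in closedBall 0 ρ, ‖g (σ n) x - G x‖ₑ ^ 2) +
      2 * ∫⁻ x in F (σ n), ‖g (σ n) x‖ₑ ^ 2) atTop (𝓝 0) := by
    have htwo : (2 : ℝ≥0∞) ≠ ∞ := ENNReal.ofNat_ne_top
    simpa only [mul_zero, add_zero, Function.comp_def] using
      (ENNReal.Tendsto.const_mul (hdiff ρ) (.inr htwo)).add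
        (ENNReal.Tendsto.const_mul (hlim0.comp hσ.tendsto_atTop) (.inr htwo))
  refine hc (nonpos_iff_eq_zero.1 (ge_of_tendsto' hsum fun n ↦ ?_))
  calc c ≤ ∫⁻ x in F (σ n), ‖G x‖ₑ ^ 2 := hle _ (hF _) (hFκ _)
    _ ≤ 2 * (∫⁻ x in F (σ n), ‖G x - g (σ n) x‖ₑ ^ 2) +
        2 * ∫⁻ x in F (σ n), ‖g (σ n) x‖ₑ ^ 2 :=
      lintegral_enorm_sq_le_sub (volume.restrict (F (σ n))) G
        (g (σ n)).continuous.aestronglyMeasurable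
    _ ≤ _ := by
      simp_rw [enorm_sub_rev (G _)]
      gcongr
      exact hF _

theorem exists_enorm_sq_mul_eq_one {a : ℝ≥0∞} (ha0 : a ≠ 0) (ha : a ≠ ∞) :
    ∃ c : ℂ, ‖c‖ₑ ^ 2 * a = 1 := by
  lift a to ℝ≥0 using ha
  have ha0' : a ≠ 0 := by simpa using ha0
  have hnorm : ‖((NNReal.sqrt a)⁻¹ : ℂ)‖₊ = (NNReal.sqrt a)⁻¹ := by
    simp [← NNReal.coe_inj]
  refine ⟨((NNReal.sqrt a)⁻¹ : ℂ), ?_⟩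
  rw [enorm_eq_nnnorm, hnorm]
  norm_cast
  rw [inv_pow, NNReal.sq_sqrt, inv_mul_cancel₀ ha0']

theorem lintegral_enorm_sq_lt_top (f : 𝓢(V, ℂ)) : ∫⁻ x, ‖f x‖ₑ ^ 2 < ∞ := by
  rw [← eLpNorm_two_sq]
  exact ENNReal.pow_lt_top (f.memLp 2 volume).2

theorem setLIntegral_enorm_sq_smul (c : ℂ) (f : 𝓢(V, ℂ)) (F : Set V) :
    ∫⁻ x in F, ‖(c • f) x‖ₑ ^ 2 = ‖c‖ₑ ^ 2 * ∫⁻ x in F, ‖f x‖ₑ ^ 2 := by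
  simp only [smul_apply, enorm_smul, mul_pow]
  exact lintegral_const_mul' _ _ (by finiteness)

theorem IsBandLimited.exists_lintegral_le_mul_setLIntegral (hs : s ≠ 0) (hκ : κ ≠ 0)
    (R r ρ : ℝ) : ∃ C : ℝ≥0, ∀ g : 𝓢(V, ℂ), IsBandLimited R g →
      s * ∫⁻ x, ‖g x‖ₑ ^ 2 ≤ ∫⁻ x in closedBall 0 r, ‖g x‖ₑ ^ 2 →
      ∀ F ⊆ closedBall 0 ρ, κ ≤ volume F →
        ∫⁻ x, ‖g x‖ₑ ^ 2 ≤ C * ∫⁻ x in F, ‖g x‖ₑ ^ 2 := by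
  by_contra! H
  have hseq (n : ℕ) : ∃ (g : 𝓢(V, ℂ)) (F : Set V), IsBandLimited R g ∧
      ∫⁻ x, ‖g x‖ₑ ^ 2 = 1 ∧ s ≤ ∫⁻ x in closedBall 0 r, ‖g x‖ₑ ^ 2 ∧
      F ⊆ closedBall 0 ρ ∧ κ ≤ volume F ∧ ∫⁻ x in F, ‖g x‖ₑ ^ 2 ≤ (n : ℝ≥0∞)⁻¹ := by
    obtain ⟨g, hg, hgs, F, hF, hκF, hlt⟩ := H n
    obtain ⟨c, hc⟩ := exists_enorm_sq_mul_eq_one (pos_of_gt hlt).ne'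
      (lintegral_enorm_sq_lt_top g).ne
    refine ⟨c • g, F, hg.const_smul c, ?_, ?_, hF, hκF, ?_⟩
    · rw [← setLIntegral_univ, setLIntegral_enorm_sq_smul, setLIntegral_univ, hc]
    · rw [setLIntegral_enorm_sq_smul]
      calc s = ‖c‖ₑ ^ 2 * (s * ∫⁻ x, ‖g x‖ₑ ^ 2) := by rw [mul_left_comm, hc, mul_one]
        _ ≤ _ := by gcongr
    · rw [setLIntegral_enorm_sq_smul, ENNReal.le_inv_iff_mul_le, mul_assoc, ← hc]
      gcongr
      simpa [mul_comm] using hlt.le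
  choose g F hg hg1 hgs hF hκF hlt using hseq
  exact not_tendsto_setLIntegral_zero hg (fun n ↦ (hg1 n).le) hs hgs hκ hF hκF <|
    tendsto_of_tendsto_of_tendsto_of_le_of_le tendsto_const_nhds
      ENNReal.tendsto_inv_nat_nhds_zero (fun _ ↦ zero_le) hlt

theorem IsBandLimited.exists_lintegral_le_add (hκ : κ ≠ 0) (R r ρ : ℝ) :
    ∃ C : ℝ≥0, ∀ g : 𝓢(V, ℂ), IsBandLimited R g → ∀ F ⊆ closedBall 0 ρ, κ ≤ volume F →
      ∫⁻ x, ‖g x‖ₑ ^ 2 ≤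
        C * (∫⁻ x in F, ‖g x‖ₑ ^ 2) + 2 * ∫⁻ x in (closedBall 0 r)ᶜ, ‖g x‖ₑ ^ 2 := by
  obtain ⟨C, hC⟩ := exists_lintegral_le_mul_setLIntegral (V := V) (s := 2⁻¹) (by simp) hκ R r ρ
  refine ⟨C, fun g hg F hF hκF ↦ ?_⟩
  have hsplit : ∫⁻ x, ‖g x‖ₑ ^ 2 = (∫⁻ x in closedBall 0 r, ‖g x‖ₑ ^ 2) +
      ∫⁻ x in (closedBall 0 r)ᶜ, ‖g x‖ₑ ^ 2 :=
    (lintegral_add_compl _ isClosed_closedBall.measurableSet).symm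
  rcases le_total (∫⁻ x in (closedBall 0 r)ᶜ, ‖g x‖ₑ ^ 2) (∫⁻ x in closedBall 0 r, ‖g x‖ₑ ^ 2)
    with hin | hout
  · refine (hC g hg ?_ F hF hκF).trans le_self_add
    rw [hsplit, ENNReal.inv_mul_le_iff two_ne_zero ENNReal.ofNat_ne_top, two_mul]
    gcongr
  · refine le_trans ?_ le_add_self
    rw [hsplit, two_mul]
    gcongr

end LocalCompactness

theorem exists_schwartzMap_eq_one_of_norm_le {V : Type*} [NormedAddCommGroup V]
    [InnerProductSpace ℝ V] [FiniteDimensional ℝ V] {r S : ℝ} (hr : 0 < r) (hrS : r < S) :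
    ∃ χ : 𝓢(V, ℂ), (∀ ξ, ‖ξ‖ ≤ r → χ ξ = 1) ∧ (∀ ξ, S ≤ ‖ξ‖ → χ ξ = 0) ∧
      ∀ ξ, ‖1 - χ ξ‖ ≤ 1 := by
  let χ : ContDiffBump (0 : V) := ⟨r, S, hr, hrS⟩
  have hsupp : HasCompactSupport fun ξ ↦ (χ ξ : ℂ) :=
    χ.hasCompactSupport.comp_left (g := fun t : ℝ ↦ (t : ℂ)) Complex.ofReal_zero
  have hdiff : ContDiff ℝ (⊤ : ℕ∞) fun ξ ↦ (χ ξ : ℂ) := Complex.ofRealCLM.contDiff.comp χ.contDiff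
  refine ⟨hsupp.toSchwartzMap hdiff, fun ξ hξ ↦ ?_, fun ξ hξ ↦ ?_, fun ξ ↦ ?_⟩
  · simp [χ.one_of_mem_closedBall (mem_closedBall_zero_iff.2 hξ)]
  · simp [χ.zero_of_le_dist (x := ξ) (by simpa using hξ)]
  · have hnorm : ‖1 - (χ ξ : ℂ)‖ = 1 - χ ξ := by
      rw [← Complex.ofReal_one, ← Complex.ofReal_sub,
        Complex.norm_of_nonneg (sub_nonneg.2 χ.le_one)]
    simpa [hnorm] using χ.nonneg

theorem lintegral_lintegral_add_mul {G : Type*} [MeasurableSpace G] [AddGroup G] [MeasurableAdd₂ G]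
    {μ ν : Measure G} [SFinite μ] [SFinite ν] [μ.IsAddLeftInvariant] {w p : G → ℝ≥0∞}
    (hw : Measurable w) (hp : Measurable p) :
    ∫⁻ v, ∫⁻ x, w (x + v) * p x ∂ν ∂μ = (∫⁻ x, w x ∂μ) * ∫⁻ x, p x ∂ν := by
  rw [lintegral_lintegral_swap (by fun_prop)]
  calc ∫⁻ x, ∫⁻ v, w (x + v) * p x ∂μ ∂ν = ∫⁻ x, (∫⁻ v, w v ∂μ) * p x ∂ν := by
        refine lintegral_congr fun x ↦ ?_
        rw [lintegral_mul_const _ (by fun_prop), lintegral_add_left_eq_self]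
    _ = _ := lintegral_const_mul _ hp

theorem measurable_lintegral_add_mul {G : Type*} [MeasurableSpace G] [Add G] [MeasurableAdd₂ G]
    {ν : Measure G} [SFinite ν] {w p : G → ℝ≥0∞} (hw : Measurable w) (hp : Measurable p) :
    Measurable fun v ↦ ∫⁻ x, w (x + v) * p x ∂ν :=
  Measurable.lintegral_prod_right' (f := fun q : G × G ↦ w (q.2 + q.1) * p q.2) (by fun_prop)

theorem tendsto_setLIntegral_compl_closedBall {X : Type*} [PseudoMetricSpace X]
    [MeasurableSpace X] [OpensMeasurableSpace X] {μ : Measure X} {w : X → ℝ≥0∞}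
    (hw : AEMeasurable w μ) (hwtop : ∫⁻ x, w x ∂μ ≠ ∞) (x₀ : X) :
    Tendsto (fun r : ℝ ↦ ∫⁻ x in (closedBall x₀ r)ᶜ, w x ∂μ) atTop (𝓝 0) := by
  have hball : Tendsto (fun r : ℝ ↦ ∫⁻ x in closedBall x₀ r, w x ∂μ) atTop
      (𝓝 (∫⁻ x, w x ∂μ)) :=
    (aecover_closedBall tendsto_id).lintegral_tendsto_of_countably_generated hw
  have hsub (r : ℝ) : ∫⁻ x in (closedBall x₀ r)ᶜ, w x ∂μ =
      ∫⁻ x, w x ∂μ - ∫⁻ x in closedBall x₀ r, w x ∂μ :=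
    setLIntegral_compl isClosed_closedBall.measurableSet
      (ne_top_of_le_ne_top hwtop (setLIntegral_le_lintegral _ _))
  simp_rw [hsub]
  simpa using ENNReal.Tendsto.sub (tendsto_const_nhds (x := ∫⁻ x, w x ∂μ)) hball (.inl hwtop)

/-- A set is thick if its intersections with all closed balls of some fixed radius have measure
bounded below by a positive constant. -/
def IsThick {X : Type*} [PseudoMetricSpace X] [MeasureSpace X] (E : Set X) : Prop :=
  ∃ (ρ : ℝ) (κ : ℝ≥0∞), κ ≠ 0 ∧ ∀ x, κ ≤ volume (E ∩ closedBall x ρ)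

section LogvinenkoSereda

variable {V : Type*} [NormedAddCommGroup V] [InnerProductSpace ℝ V] [FiniteDimensional ℝ V]
  [MeasurableSpace V] [BorelSpace V]

theorem exists_isBandLimited_lintegral_ne_zero {R : ℝ} (hR : 0 < R) :
    ∃ θ : 𝓢(V, ℂ), IsBandLimited R θ ∧ ∫⁻ x, ‖θ x‖ₑ ^ 2 ≠ 0 := by
  obtain ⟨χ, hχ1, hχ0, -⟩ := exists_schwartzMap_eq_one_of_norm_le (V := V) (half_pos hR)
    (half_lt_self hR)
  have hθ : 𝓕 (𝓕⁻ χ) = χ := FourierTransform.fourier_fourierInv_eq χ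
  refine ⟨𝓕⁻ χ, fun ξ hξ ↦ by rw [hθ, hχ0 ξ hξ.le], fun hzero ↦ ?_⟩
  rw [← lintegral_enorm_sq_fourier, hθ,
    lintegral_eq_zero_iff (χ.continuous.measurable.enorm.pow_const 2)] at hzero
  have hχ : ⇑χ = fun _ ↦ 0 := (Continuous.ae_eq_iff_eq volume χ.continuous continuous_const).1 <|
    hzero.mono fun x hx ↦ by simpa using hx
  simpa [hχ] using hχ1 0 (by simpa using (half_pos hR).le)

theorem IsBandLimited.exists_lintegral_translate_le {κ : ℝ≥0∞} (hκ : κ ≠ 0) (R S r ρ : ℝ) :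
    ∃ C : ℝ≥0, ∀ f θ : 𝓢(V, ℂ), IsBandLimited R f → IsBandLimited S θ →
      ∀ (E : Set V), MeasurableSet E → ∀ v, κ ≤ volume (E ∩ closedBall v ρ) →
      ∫⁻ x, ‖f (x + v)‖ₑ ^ 2 * ‖θ x‖ₑ ^ 2 ≤
        C * (∫⁻ x, E.indicator (fun y ↦ ‖f y‖ₑ ^ 2) (x + v) * ‖θ x‖ₑ ^ 2) +
        2 * ∫⁻ x in (closedBall 0 r)ᶜ, ‖f (x + v)‖ₑ ^ 2 * ‖θ x‖ₑ ^ 2 := by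
  obtain ⟨C, hC⟩ := exists_lintegral_le_add (V := V) hκ (R + S) r ρ
  refine ⟨C, fun f θ hf hθ E hE v hκv ↦ ?_⟩
  let g : 𝓢(V, ℂ) := SchwartzMap.pairing (ContinuousLinearMap.mul ℂ ℂ)
    (f.compSubConstCLM ℂ (-v)) θ
  have hg (x : V) : ‖g x‖ₑ ^ 2 = ‖f (x + v)‖ₑ ^ 2 * ‖θ x‖ₑ ^ 2 := by
    simp [g, enorm_mul, mul_pow]
  let F : Set V := (· + v) ⁻¹' (E ∩ closedBall v ρ)
  have hFm : MeasurableSet F :=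
    measurable_add_const v (hE.inter isClosed_closedBall.measurableSet)
  have hFρ : F ⊆ closedBall 0 ρ := fun x hx ↦ by simpa [dist_eq_norm] using hx.2
  have hFκ : κ ≤ volume F := by rwa [measure_preimage_add_right]
  have hlocal := hC g ((hf.compSubConst (-v)).pairing_mul hθ) F hFρ hFκ
  simp_rw [hg] at hlocal
  have hFE : ∫⁻ x in F, ‖f (x + v)‖ₑ ^ 2 * ‖θ x‖ₑ ^ 2 ≤
      ∫⁻ x, E.indicator (fun y ↦ ‖f y‖ₑ ^ 2) (x + v) * ‖θ x‖ₑ ^ 2 := by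
    refine (setLIntegral_mono' hFm fun x hx ↦ ?_).trans (setLIntegral_le_lintegral _ _)
    rw [indicator_of_mem hx.1]
  exact hlocal.trans (by gcongr)

theorem IsBandLimited.exists_lintegral_mul_lintegral_le {κ : ℝ≥0∞} (hκ : κ ≠ 0) (R S r ρ : ℝ) :
    ∃ C : ℝ≥0, ∀ f θ : 𝓢(V, ℂ), IsBandLimited R f → IsBandLimited S θ →
      ∀ (E : Set V), MeasurableSet E → (∀ v, κ ≤ volume (E ∩ closedBall v ρ)) →
      (∫⁻ x, ‖f x‖ₑ ^ 2) * ∫⁻ x, ‖θ x‖ₑ ^ 2 ≤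
        C * ((∫⁻ x in E, ‖f x‖ₑ ^ 2) * ∫⁻ x, ‖θ x‖ₑ ^ 2) +
        2 * ((∫⁻ x, ‖f x‖ₑ ^ 2) * ∫⁻ x in (closedBall 0 r)ᶜ, ‖θ x‖ₑ ^ 2) := by
  obtain ⟨C, hC⟩ := exists_lintegral_translate_le (V := V) hκ R S r ρ
  refine ⟨C, fun f θ hf hθ E hE hκE ↦ ?_⟩
  have hfm : Measurable fun x ↦ ‖f x‖ₑ ^ 2 := f.continuous.measurable.enorm.pow_const 2
  have hθm : Measurable fun x ↦ ‖θ x‖ₑ ^ 2 := θ.continuous.measurable.enorm.pow_const 2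
  have hEm : Measurable (E.indicator fun x ↦ ‖f x‖ₑ ^ 2) := hfm.indicator hE
  rw [← lintegral_indicator hE, ← lintegral_lintegral_add_mul hfm hθm,
    ← lintegral_lintegral_add_mul hEm hθm, ← lintegral_lintegral_add_mul hfm hθm]
  refine (lintegral_mono fun v ↦ hC f θ hf hθ E hE v (hκE v)).trans_eq ?_
  rw [lintegral_add_left ((measurable_lintegral_add_mul hEm hθm).const_mul _),
    lintegral_const_mul' _ _ ENNReal.coe_ne_top, lintegral_const_mul' _ _ ENNReal.ofNat_ne_top]

theorem IsThick.exists_lintegral_le_of_isBandLimited {E : Set V} (hthick : IsThick E)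
    (hE : MeasurableSet E) (R : ℝ) : ∃ C : ℝ≥0, ∀ f : 𝓢(V, ℂ), IsBandLimited R f →
      ∫⁻ x, ‖f x‖ₑ ^ 2 ≤ C * ∫⁻ x in E, ‖f x‖ₑ ^ 2 := by
  obtain ⟨ρ, κ, hκ, hκE⟩ := hthick
  obtain ⟨θ, hθ, hθ0⟩ := exists_isBandLimited_lintegral_ne_zero (V := V) one_pos
  have hθtop : ∫⁻ x, ‖θ x‖ₑ ^ 2 ≠ ∞ := (lintegral_enorm_sq_lt_top θ).ne
  obtain ⟨r, hr⟩ := ((tendsto_setLIntegral_compl_closedBall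
    (θ.continuous.measurable.enorm.pow_const 2).aemeasurable hθtop 0).eventually_lt_const
    (ENNReal.div_pos hθ0 ENNReal.ofNat_ne_top : 0 < (∫⁻ x, ‖θ x‖ₑ ^ 2) / 4)).exists
  obtain ⟨C, hC⟩ := IsBandLimited.exists_lintegral_mul_lintegral_le (V := V) hκ R 1 r ρ
  refine ⟨2 * C, fun f hf ↦ ?_⟩
  have hCf := hC f θ hf hθ E hE hκE
  have hftop : ∫⁻ x, ‖f x‖ₑ ^ 2 ≠ ∞ := (lintegral_enorm_sq_lt_top f).ne
  set A := ∫⁻ x, ‖f x‖ₑ ^ 2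
  set B := ∫⁻ x in E, ‖f x‖ₑ ^ 2
  set T := ∫⁻ x, ‖θ x‖ₑ ^ 2
  set T' := ∫⁻ x in (closedBall 0 r)ᶜ, ‖θ x‖ₑ ^ 2
  have hT' : 4 * T' ≤ T := by
    simpa [mul_comm] using ENNReal.mul_le_of_le_div hr.le
  have habsorb : A * T + A * T ≤ (2 * C : ℝ≥0) * B * T + A * T :=
    calc A * T + A * T = 2 * (A * T) := (two_mul _).symm
      _ ≤ 2 * (C * (B * T) + 2 * (A * T')) := by gcongr
      _ = (2 * C : ℝ≥0) * B * T + A * (4 * T') := by push_cast; ring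
      _ ≤ (2 * C : ℝ≥0) * B * T + A * T := by gcongr
  have hcancel : A * T ≤ (2 * C : ℝ≥0) * B * T :=
    (ENNReal.add_le_add_iff_right (ENNReal.mul_ne_top hftop hθtop)).1 habsorb
  exact (ENNReal.mul_le_mul_iff_left hθ0 hθtop).1 hcancel

end LogvinenkoSereda

section SpectralInequality

variable {V : Type*} [NormedAddCommGroup V] [InnerProductSpace ℝ V] [FiniteDimensional ℝ V]
  [MeasurableSpace V] [BorelSpace V]

theorem exists_isBandLimited_fourier_sub {R S : ℝ} (hR : 0 < R) (hRS : R < S) (f : 𝓢(V, ℂ)) :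
    ∃ p : 𝓢(V, ℂ), IsBandLimited S p ∧ (∀ ξ, ‖ξ‖ ≤ R → 𝓕 (f - p) ξ = 0) ∧
      ∀ ξ, ‖𝓕 (f - p) ξ‖ ≤ ‖𝓕 f ξ‖ := by
  obtain ⟨χ, hχ1, hχ0, hχle⟩ := exists_schwartzMap_eq_one_of_norm_le (V := V) hR hRS
  let p : 𝓢(V, ℂ) := 𝓕⁻ (SchwartzMap.pairing (ContinuousLinearMap.mul ℂ ℂ) χ (𝓕 f))
  have hp (ξ : V) : 𝓕 p ξ = χ ξ * 𝓕 f ξ := by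
    rw [FourierTransform.fourier_fourierInv_eq]
    rfl
  have hfp (ξ : V) : 𝓕 (f - p) ξ = (1 - χ ξ) * 𝓕 f ξ := by
    rw [sub_eq_add_neg, FourierTransform.fourier_add, FourierTransform.fourier_neg, add_apply,
      neg_apply, hp]
    ring
  refine ⟨p, fun ξ hξ ↦ ?_, fun ξ hξ ↦ ?_, fun ξ ↦ ?_⟩
  · rw [hp, hχ0 ξ hξ.le, zero_mul]
  · rw [hfp, hχ1 ξ hξ, sub_self, zero_mul]
  · rw [hfp, norm_mul]
    exact mul_le_of_le_one_left (norm_nonneg _) (hχle ξ)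

theorem IsThick.exists_lintegral_le_of_norm_fourier_le {E : Set V} (hthick : IsThick E)
    (hE : MeasurableSet E) {R : ℝ} (hR : 0 < R) : ∃ C : ℝ≥0, ∀ φ h : 𝓢(V, ℂ),
      (∀ ξ, R ≤ ‖ξ‖ → ‖𝓕 φ ξ‖ ≤ ‖𝓕 h ξ‖) →
      ∫⁻ x, ‖φ x‖ₑ ^ 2 ≤ C * ((∫⁻ x, ‖h x‖ₑ ^ 2) + ∫⁻ x in E, ‖φ x‖ₑ ^ 2) := by
  obtain ⟨C, hC⟩ := hthick.exists_lintegral_le_of_isBandLimited hE (R + 1)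
  refine ⟨4 * C + 2, fun φ h hφh ↦ ?_⟩
  obtain ⟨p, hp, hlow, hle⟩ := exists_isBandLimited_fourier_sub hR (lt_add_one R) φ
  have hhigh : ∫⁻ x, ‖φ x - p x‖ₑ ^ 2 ≤ ∫⁻ x, ‖h x‖ₑ ^ 2 := by
    refine (lintegral_enorm_sq_fourier (φ - p)).symm.trans_le
      (le_of_le_of_eq (lintegral_mono fun ξ ↦ ?_) (lintegral_enorm_sq_fourier h))
    gcongr
    refine enorm_le_iff_norm_le.2 ?_
    rcases le_total ‖ξ‖ R with hξ | hξ
    · rw [hlow ξ hξ, norm_zero]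
      exact norm_nonneg _
    · exact (hle ξ).trans (hφh ξ hξ)
  have hpE : ∫⁻ x in E, ‖p x‖ₑ ^ 2 ≤
      2 * (∫⁻ x, ‖φ x - p x‖ₑ ^ 2) + 2 * ∫⁻ x in E, ‖φ x‖ₑ ^ 2 := by
    refine (lintegral_enorm_sq_le_sub (volume.restrict E) p
      φ.continuous.aestronglyMeasurable).trans ?_
    simp_rw [enorm_sub_rev (p _)]
    gcongr
    exact Measure.restrict_le_self
  set H := ∫⁻ x, ‖h x‖ₑ ^ 2
  set B := ∫⁻ x in E, ‖φ x‖ₑ ^ 2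
  calc ∫⁻ x, ‖φ x‖ₑ ^ 2 ≤ 2 * (∫⁻ x, ‖φ x - p x‖ₑ ^ 2) + 2 * ∫⁻ x, ‖p x‖ₑ ^ 2 :=
        lintegral_enorm_sq_le_sub volume φ p.continuous.aestronglyMeasurable
    _ ≤ 2 * H + 2 * (C * (2 * H + 2 * B)) := by
        gcongr
        exact (hC p hp).trans (by gcongr; exact hpE.trans (by gcongr))
    _ ≤ 2 * H + 2 * (C * (2 * H + 2 * B)) + 2 * B := le_self_add
    _ = (4 * C + 2 : ℝ≥0) * (H + B) := by push_cast; ring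

end SpectralInequality

section GinzburgLandau

variable {V : Type*} [NormedAddCommGroup V] [InnerProductSpace ℝ V] [FiniteDimensional ℝ V]
  [MeasurableSpace V] [BorelSpace V]

theorem fourier_laplacian_apply (f : 𝓢(V, ℂ)) (ξ : V) :
    𝓕 (Δ f) ξ = -((2 * π * ‖ξ‖ : ℝ) : ℂ) ^ 2 * 𝓕 f ξ := by
  rw [SchwartzMap.laplacian_eq_fourierMultiplierCLM, FourierTransform.fourier_smul,
    SchwartzMap.fourierMultiplierCLM_apply, FourierTransform.fourier_fourierInv_eq, smul_apply,
    SchwartzMap.smulLeftCLM_apply_apply (by fun_prop)]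
  simp [mul_pow, mul_assoc]

theorem exists_forall_one_le_norm_add_mul_sq {c : ℂ} (hc : 0 < c.re) (β : ℝ) :
    ∃ R : ℝ, 0 < R ∧ ∀ lam : ℂ, -β ≤ lam.re → ∀ t : ℝ, R ≤ t → 1 ≤ ‖lam + c * (t : ℂ) ^ 2‖ := by
  have hgrow : ∀ᶠ t : ℝ in atTop, β + 1 ≤ c.re * t ^ 2 :=
    ((tendsto_pow_atTop two_ne_zero).const_mul_atTop hc).eventually_ge_atTop _
  obtain ⟨R₀, hR₀⟩ := eventually_atTop.1 hgrow
  refine ⟨max R₀ 1, by positivity, fun lam hlam t ht ↦ ?_⟩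
  have hre : (lam + c * (t : ℂ) ^ 2).re = lam.re + c.re * t ^ 2 := by
    rw [Complex.add_re, ← Complex.ofReal_pow, Complex.re_mul_ofReal]
  calc (1 : ℝ) ≤ (lam + c * (t : ℂ) ^ 2).re := by
        linarith [hR₀ t (le_of_max_le_left ht)]
    _ ≤ _ := Complex.re_le_norm _

theorem ofReal_setIntegral_norm_sq (f : 𝓢(V, ℂ)) (s : Set V) :
    ENNReal.ofReal (∫ x in s, ‖f x‖ ^ 2) = ∫⁻ x in s, ‖f x‖ₑ ^ 2 := by
  rw [ofReal_integral_eq_lintegral_ofReal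
    ((f.memLp 2 volume).integrable_norm_pow two_ne_zero).integrableOn
    (Eventually.of_forall fun x ↦ by positivity)]
  simp only [ENNReal.ofReal_pow (norm_nonneg _), ofReal_norm]

theorem IsThick.exists_integral_norm_sq_le_resolvent {E : Set V} (hthick : IsThick E)
    (hE : MeasurableSet E) {c : ℂ} (hc : 0 < c.re) (β : ℝ) :
    ∃ C : ℝ, 0 < C ∧ ∀ lam : ℂ, -β ≤ lam.re → ∀ φ : 𝓢(V, ℂ),
      ∫ x, ‖φ x‖ ^ 2 ≤
        C * ((∫ x, ‖lam * φ x - c * Δ φ x‖ ^ 2) + ∫ x in E, ‖φ x‖ ^ 2) := by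
  obtain ⟨R, hR, hsymb⟩ := exists_forall_one_le_norm_add_mul_sq hc β
  obtain ⟨C, hC⟩ := hthick.exists_lintegral_le_of_norm_fourier_le hE hR
  refine ⟨C + 1, by positivity, fun lam hlam φ ↦ ?_⟩
  let h : 𝓢(V, ℂ) := lam • φ - c • Δ φ
  have hfourier (ξ : V) : 𝓕 h ξ = (lam + c * ((2 * π * ‖ξ‖ : ℝ) : ℂ) ^ 2) * 𝓕 φ ξ := by
    simp only [h]
    rw [sub_eq_add_neg, FourierTransform.fourier_add, FourierTransform.fourier_neg,
      FourierTransform.fourier_smul, FourierTransform.fourier_smul, add_apply, neg_apply,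
      smul_apply, smul_apply, fourier_laplacian_apply, smul_eq_mul, smul_eq_mul]
    ring
  have hle := hC φ h fun ξ hξ ↦ by
    rw [hfourier, norm_mul]
    refine le_mul_of_one_le_left (norm_nonneg _) (hsymb lam hlam _ (hξ.trans ?_))
    exact le_mul_of_one_le_left (norm_nonneg _) (by linarith [Real.pi_gt_three])
  rw [← setLIntegral_univ, ← setLIntegral_univ fun x ↦ ‖h x‖ₑ ^ 2, ← ofReal_setIntegral_norm_sq,
    ← ofReal_setIntegral_norm_sq, ← ofReal_setIntegral_norm_sq, setIntegral_univ, setIntegral_univ,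
    ← ENNReal.ofReal_add (by positivity) (by positivity), ← ENNReal.ofReal_coe_nnreal,
    ← ENNReal.ofReal_mul C.coe_nonneg, ENNReal.ofReal_le_ofReal_iff (by positivity)] at hle
  exact hle.trans (mul_le_mul_of_nonneg_right (le_add_of_nonneg_right zero_le_one) (by positivity))

end GinzburgLandau

section Coordinates

theorem IsThick.preimage {X Y : Type*} [PseudoMetricSpace X] [MeasureSpace X]
    [PseudoMetricSpace Y] [MeasureSpace Y] [OpensMeasurableSpace Y] {E : Set Y}
    (hthick : IsThick E) (hE : MeasurableSet E) {f : X → Y} (hf : MeasurePreserving f) {K : ℝ≥0}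
    (hanti : AntilipschitzWith K f) : IsThick (f ⁻¹' E) := by
  obtain ⟨ρ, κ, hκ, hκE⟩ := hthick
  refine ⟨K * ρ, κ, hκ, fun x ↦ ?_⟩
  have hmeas : MeasurableSet (E ∩ closedBall (f x) ρ) :=
    hE.inter isClosed_closedBall.measurableSet
  calc κ ≤ volume (f ⁻¹' (E ∩ closedBall (f x) ρ)) :=
        (hκE (f x)).trans_eq (hf.measure_preimage hmeas.nullMeasurableSet).symm
    _ ≤ volume (f ⁻¹' E ∩ closedBall x (K * ρ)) := by
        refine measure_mono fun y hy ↦ ⟨hy.1, (hanti.le_mul_dist y x).trans ?_⟩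
        exact mul_le_mul_of_nonneg_left hy.2 K.coe_nonneg

theorem isThick_of_forall_le_volume_inter_cube {ι : Type*} [Fintype ι] {E : Set (ι → ℝ)}
    {L : ℝ} (hL : 0 ≤ L) {κ : ℝ≥0∞} (hκ : κ ≠ 0)
    (hE : ∀ x : ι → ℝ, κ ≤ volume (E ∩ {y | ∀ i, |y i - x i| ≤ L / 2})) : IsThick E := by
  refine ⟨L / 2, κ, hκ, fun x ↦ (hE x).trans_eq ?_⟩
  congr 2
  ext y
  simp [dist_pi_le_iff (div_nonneg hL zero_le_two), Real.dist_eq]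

theorem laplacian_compCLMOfContinuousLinearEquiv_ofLp {ι : Type*} [Fintype ι] [DecidableEq ι]
    (φ : 𝓢(ι → ℝ, ℂ)) (x : EuclideanSpace ℝ ι) :
    Δ (SchwartzMap.compCLMOfContinuousLinearEquiv ℂ
        (PiLp.continuousLinearEquiv 2 ℝ fun _ : ι ↦ ℝ) φ) x =
      ∑ j, fderiv ℝ (fun y ↦ fderiv ℝ φ y (Pi.single j 1)) x.ofLp (Pi.single j 1) := by
  rw [SchwartzMap.laplacian_eq_sum (EuclideanSpace.basisFun ι ℝ), sum_apply]
  refine Finset.sum_congr rfl fun j _ ↦ ?_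
  have hbasis : PiLp.continuousLinearEquiv 2 ℝ (fun _ : ι ↦ ℝ) (EuclideanSpace.basisFun ι ℝ j) =
      Pi.single j 1 := by
    ext i
    simp [Pi.single_apply]
  rw [SchwartzMap.lineDerivOp_compCLMOfContinuousLinearEquiv,
    SchwartzMap.lineDerivOp_compCLMOfContinuousLinearEquiv, hbasis]
  rfl

end Coordinates

end

/-- Frequency-domain (Hautus-type) inequality for the Ginzburg–Landau operator on a thick
set: if `E ⊆ ℝ^N` is thick, `a > 0`, `b ∈ ℝ` and `β > 0`, then there is `C > 0` such that
for all `λ` with `Re λ > -β` and all Schwartz functions `φ`,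
`∫|φ|² ≤ C (∫|λφ - (a - i b)Δφ|² + ∫_E |φ|²)`. -/
theorem ginzburg_landau_HESI
    {N : ℕ} (hN : 0 < N) (E : Set (Fin N → ℝ)) (hE : MeasurableSet E)
    (hthick : ∃ ε : ℝ, 0 < ε ∧ ∃ L : ℝ, 0 < L ∧ ∀ x : Fin N → ℝ,
      ENNReal.ofReal (ε * L ^ N) ≤ volume (E ∩ {y | ∀ i, |y i - x i| ≤ L / 2}))
    (a : ℝ) (ha : 0 < a) (b : ℝ) (β : ℝ) (hβ : 0 < β) :
    ∃ C : ℝ, 0 < C ∧ ∀ lam : ℂ, -β < lam.re → ∀ φ : SchwartzMap (Fin N → ℝ) ℂ,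
      (∫ x : Fin N → ℝ, ‖φ x‖ ^ 2)
        ≤ C * ((∫ x : Fin N → ℝ,
            ‖lam * φ x - ((a : ℂ) - (b : ℂ) * Complex.I) *
              (∑ j, fderiv ℝ (fun y => fderiv ℝ (⇑φ) y (Pi.single j 1)) x
                (Pi.single j 1))‖ ^ 2)
          + ∫ x in E, ‖φ x‖ ^ 2) := by
  obtain ⟨ε, hε, L, hL, hcube⟩ := hthick
  let e := PiLp.continuousLinearEquiv 2 ℝ fun _ : Fin N ↦ ℝ
  have he : MeasurePreserving e := PiLp.volume_preserving_ofLp (Fin N)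
  have hemb : MeasurableEmbedding e := e.toHomeomorph.measurableEmbedding
  have hthick : IsThick E := isThick_of_forall_le_volume_inter_cube hL.le
    (ENNReal.ofReal_pos.2 (by positivity)).ne' hcube
  have hc : 0 < ((a : ℂ) - (b : ℂ) * Complex.I).re := by simpa using ha
  obtain ⟨C, hC, hres⟩ := (hthick.preimage hE he
    (PiLp.antilipschitzWith_ofLp 2 _)).exists_integral_norm_sq_le_resolvent (he.measurable hE) hc β
  refine ⟨C, hC, fun lam hlam φ ↦ ?_⟩
  have hφ := hres lam hlam.le (SchwartzMap.compCLMOfContinuousLinearEquiv ℂ e φ)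
  simp only [e, laplacian_compCLMOfContinuousLinearEquiv_ofLp] at hφ
  rwa [← he.integral_comp hemb, ← he.integral_comp hemb, ← he.setIntegral_preimage_emb hemb]
end

section
/- Let c > π², let n* := ⌊√c/π⌋, for each positive integer n set λ_n := c − n²π², and let x₀ ∈ (0,1) satisfy sin(nπx₀) ≠ 0 for every integer n with 1 ≤ n ≤ n*. Then for every β > 0 there exists C > 0 such that for every λ ∈ ℂ with Re λ > −β and every tuple (a₁,…,a_{n*}) of complex numbers, Σ_{n=1}^{n*} |a_n|² ≤ C·( Σ_{n=1}^{n*} |(λ − λ_n)·a_n|² + |Σ_{n=1}^{n*} a_n·√2·sin(nπx₀)|² ). -/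
/-!
Given `lam`, let `m` be the index of an eigenvalue nearest to `lam`. Every other eigenvalue is at
distance at least half the spectral gap from `lam`, so the terms `(lam - λ_n) a_n` control all
coefficients but `a_m`; the observation, whose weight at `m` is nonzero, then controls `a_m`.
-/

open Real Finset

section HautusInequality

variable {ι 𝕜 E : Type*} [NormedField 𝕜] [SeminormedAddCommGroup E] [NormedSpace 𝕜 E]
  {S : Finset ι} {δ ε : ℝ}

lemma exists_pos_forall_mem_le {f : ι → ℝ} (hf : ∀ i ∈ S, 0 < f i) :
    ∃ r, 0 < r ∧ ∀ i ∈ S, r ≤ f i := by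
  rcases S.eq_empty_or_nonempty with rfl | hS
  · exact ⟨1, one_pos, by simp⟩
  · obtain ⟨m, hm, hmin⟩ := S.exists_min_image f hS
    exact ⟨f m, hf m hm, hmin⟩

lemma exists_pos_pairwise_two_mul_le_dist {X : Type*} [MetricSpace X] {μ : ι → X}
    (hμ : Set.InjOn μ S) :
    ∃ δ, 0 < δ ∧ (S : Set ι).Pairwise fun i j ↦ 2 * δ ≤ dist (μ i) (μ j) := by
  classical
  obtain ⟨r, hr, hle⟩ := exists_pos_forall_mem_le (S := S.offDiag)
    (f := fun p ↦ dist (μ p.1) (μ p.2)) fun p hp ↦ by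
      obtain ⟨hi, hj, hij⟩ := mem_offDiag.1 hp
      exact dist_pos.2 (hμ.ne hi hj hij)
  refine ⟨r / 2, half_pos hr, fun i hi j hj hij ↦ ?_⟩
  rw [mul_div_cancel₀ r two_ne_zero]
  exact hle (i, j) (mem_offDiag.2 ⟨hi, hj, hij⟩)

lemma exists_mem_forall_ne_le_dist {X : Type*} [PseudoMetricSpace X] {μ : ι → X}
    (hS : S.Nonempty) (hsep : (S : Set ι).Pairwise fun i j ↦ 2 * δ ≤ dist (μ i) (μ j)) (x : X) :
    ∃ m ∈ S, ∀ n ∈ S, n ≠ m → δ ≤ dist x (μ n) := by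
  obtain ⟨m, hm, hnearest⟩ := S.exists_min_image (fun n ↦ dist x (μ n)) hS
  refine ⟨m, hm, fun n hn hnm ↦ ?_⟩
  have htriangle := dist_triangle_left (μ n) (μ m) x
  linarith [hsep hn hm hnm, hnearest n hn]

lemma norm_sum_smul_sq_le (S : Finset ι) (a : ι → 𝕜) (b : ι → E) :
    ‖∑ n ∈ S, a n • b n‖ ^ 2 ≤ (∑ n ∈ S, ‖b n‖ ^ 2) * ∑ n ∈ S, ‖a n‖ ^ 2 :=
  calc ‖∑ n ∈ S, a n • b n‖ ^ 2 ≤ (∑ n ∈ S, ‖b n‖ * ‖a n‖) ^ 2 := by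
        gcongr
        exact norm_sum_le_of_le S fun n _ ↦ by rw [norm_smul, mul_comm]
    _ ≤ _ := sum_mul_sq_le_sq_mul_sq S _ _

lemma sum_norm_sq_le_sum_norm_sub_mul_sq_div {μ : ι → 𝕜} {z : 𝕜} (hδ : 0 < δ)
    (hfar : ∀ n ∈ S, δ ≤ dist z (μ n)) (a : ι → 𝕜) :
    ∑ n ∈ S, ‖a n‖ ^ 2 ≤ (∑ n ∈ S, ‖(z - μ n) * a n‖ ^ 2) / δ ^ 2 := by
  rw [le_div_iff₀' (by positivity), mul_sum]
  refine sum_le_sum fun n hn ↦ ?_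
  rw [norm_mul, mul_pow, ← dist_eq_norm]
  gcongr
  exact hfar n hn

lemma norm_smul_sq_le_observation_add_erase [DecidableEq ι] {m : ι} (hm : m ∈ S)
    (a : ι → 𝕜) (b : ι → E) :
    ‖a m • b m‖ ^ 2 ≤ 2 * (‖∑ n ∈ S, a n • b n‖ ^ 2
      + (∑ n ∈ S, ‖b n‖ ^ 2) * ∑ n ∈ S.erase m, ‖a n‖ ^ 2) := by
  have hsplit : a m • b m = ∑ n ∈ S, a n • b n - ∑ n ∈ S.erase m, a n • b n := by
    rw [← add_sum_erase S (fun n ↦ a n • b n) hm, add_sub_cancel_right]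
  have herase : ‖∑ n ∈ S.erase m, a n • b n‖ ^ 2
      ≤ (∑ n ∈ S, ‖b n‖ ^ 2) * ∑ n ∈ S.erase m, ‖a n‖ ^ 2 := by
    refine (norm_sum_smul_sq_le _ a b).trans ?_
    gcongr
    exact erase_subset m S
  calc ‖a m • b m‖ ^ 2
      ≤ (‖∑ n ∈ S, a n • b n‖ + ‖∑ n ∈ S.erase m, a n • b n‖) ^ 2 := by
        rw [hsplit]
        gcongr
        exact norm_sub_le _ _
    _ ≤ 2 * (‖∑ n ∈ S, a n • b n‖ ^ 2 + ‖∑ n ∈ S.erase m, a n • b n‖ ^ 2) := add_sq_le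
    _ ≤ _ := by gcongr

lemma sum_norm_sq_le_erase_add_observation [DecidableEq ι] {m : ι} {b : ι → E} (hm : m ∈ S)
    (hε : 0 < ε) (hbm : ε ≤ ‖b m‖) (a : ι → 𝕜) :
    ∑ n ∈ S, ‖a n‖ ^ 2
      ≤ (1 + 2 * (∑ n ∈ S, ‖b n‖ ^ 2) / ε ^ 2) * ∑ n ∈ S.erase m, ‖a n‖ ^ 2
        + 2 / ε ^ 2 * ‖∑ n ∈ S, a n • b n‖ ^ 2 := by
  have hmode : ‖a m‖ ^ 2 ≤ 2 * (‖∑ n ∈ S, a n • b n‖ ^ 2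
      + (∑ n ∈ S, ‖b n‖ ^ 2) * ∑ n ∈ S.erase m, ‖a n‖ ^ 2) / ε ^ 2 := by
    rw [le_div_iff₀ (by positivity)]
    calc ‖a m‖ ^ 2 * ε ^ 2 ≤ ‖a m • b m‖ ^ 2 := by
          rw [norm_smul, mul_pow]
          gcongr
      _ ≤ _ := norm_smul_sq_le_observation_add_erase hm a b
  rw [← add_sum_erase S (fun n ↦ ‖a n‖ ^ 2) hm]
  refine (add_le_add_left hmode _).trans_eq ?_
  ring

theorem sum_norm_sq_le_hautus {μ : ι → 𝕜} {b : ι → E} (hδ : 0 < δ) (hε : 0 < ε)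
    (hsep : (S : Set ι).Pairwise fun i j ↦ 2 * δ ≤ dist (μ i) (μ j))
    (hb : ∀ n ∈ S, ε ≤ ‖b n‖) (z : 𝕜) (a : ι → 𝕜) :
    ∑ n ∈ S, ‖a n‖ ^ 2
      ≤ ((1 + 2 * (∑ n ∈ S, ‖b n‖ ^ 2) / ε ^ 2) / δ ^ 2 + 2 / ε ^ 2)
        * (∑ n ∈ S, ‖(z - μ n) * a n‖ ^ 2 + ‖∑ n ∈ S, a n • b n‖ ^ 2) := by
  classical
  rcases S.eq_empty_or_nonempty with rfl | hS
  · simp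
  obtain ⟨m, hm, hfar⟩ := exists_mem_forall_ne_le_dist hS hsep z
  set R := ∑ n ∈ S, ‖(z - μ n) * a n‖ ^ 2
  set O := ‖∑ n ∈ S, a n • b n‖ ^ 2
  set K := 1 + 2 * (∑ n ∈ S, ‖b n‖ ^ 2) / ε ^ 2
  have hrest : ∑ n ∈ S.erase m, ‖a n‖ ^ 2 ≤ R / δ ^ 2 := by
    refine (sum_norm_sq_le_sum_norm_sub_mul_sq_div hδ
      (fun n hn ↦ hfar n (mem_of_mem_erase hn) (ne_of_mem_erase hn)) a).trans ?_
    gcongr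
    exact sum_le_sum_of_subset_of_nonneg (erase_subset m S) fun _ _ _ ↦ by positivity
  calc ∑ n ∈ S, ‖a n‖ ^ 2
      ≤ K * ∑ n ∈ S.erase m, ‖a n‖ ^ 2 + 2 / ε ^ 2 * O :=
        sum_norm_sq_le_erase_add_observation hm hε (hb m hm) a
    _ ≤ K * (R / δ ^ 2) + 2 / ε ^ 2 * O := by gcongr
    _ = K / δ ^ 2 * R + 2 / ε ^ 2 * O := by ring
    _ ≤ (K / δ ^ 2 + 2 / ε ^ 2) * R + (K / δ ^ 2 + 2 / ε ^ 2) * O := by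
        gcongr
        · exact le_add_of_nonneg_right (by positivity)
        · exact le_add_of_nonneg_left (by positivity)
    _ = (K / δ ^ 2 + 2 / ε ^ 2) * (R + O) := by ring

theorem exists_pos_sum_norm_sq_le_hautus {F : Type*} [NormedAddCommGroup F] [NormedSpace 𝕜 F]
    {μ : ι → 𝕜} {b : ι → F} (hμ : Set.InjOn μ S) (hb : ∀ n ∈ S, b n ≠ 0) :
    ∃ C : ℝ, 0 < C ∧ ∀ (z : 𝕜) (a : ι → 𝕜),
      ∑ n ∈ S, ‖a n‖ ^ 2
        ≤ C * (∑ n ∈ S, ‖(z - μ n) * a n‖ ^ 2 + ‖∑ n ∈ S, a n • b n‖ ^ 2) := by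
  obtain ⟨δ, hδ, hsep⟩ := exists_pos_pairwise_two_mul_le_dist hμ
  obtain ⟨ε, hε, hbε⟩ := exists_pos_forall_mem_le fun n hn ↦ norm_pos_iff.2 (hb n hn)
  exact ⟨_, by positivity, sum_norm_sq_le_hautus hδ hε hsep hbε⟩

end HautusInequality

lemma injective_sub_sq_mul_pi_sq (c : ℝ) :
    Function.Injective fun n : ℕ ↦ c - (n : ℝ) ^ 2 * π ^ 2 := by
  intro m n h
  have hsq : (m : ℝ) ^ 2 = (n : ℝ) ^ 2 :=
    mul_right_cancel₀ (pow_ne_zero 2 pi_ne_zero) (sub_right_injective h)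
  exact_mod_cast (pow_left_inj₀ m.cast_nonneg n.cast_nonneg two_ne_zero).1 hsq

theorem pointwise_control_finite_hautus_general (S : Finset ℕ) (c x₀ : ℝ)
    (hsin : ∀ n ∈ S, Real.sin (n * π * x₀) ≠ 0) :
    ∃ C : ℝ, 0 < C ∧ ∀ (lam : ℂ) (a : ℕ → ℂ),
      ∑ n ∈ S, ‖a n‖ ^ 2
        ≤ C * ((∑ n ∈ S, ‖(lam - ((c - n ^ 2 * π ^ 2 : ℝ) : ℂ)) * a n‖ ^ 2)
          + ‖∑ n ∈ S, a n * ((Real.sqrt 2 * Real.sin (n * π * x₀) : ℝ) : ℂ)‖ ^ 2) :=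
  exists_pos_sum_norm_sq_le_hautus
    (Complex.ofReal_injective.comp (injective_sub_sq_mul_pi_sq c)).injOn
    fun n hn ↦ Complex.ofReal_ne_zero.2 (mul_ne_zero (by positivity) (hsin n hn))

/-- Quantitative Hautus inequality, uniform over the half-plane `Re λ > -β`, for the
finite-dimensional projected pair arising from the point-controlled heat equation
`y_t = y_xx + c y + δ(· - x₀) u`: the eigenvalues are `λ_n = c - n²π²` and the point
observation of the first `n* = ⌊√c/π⌋` modes is `Σ aₙ √2 sin(nπx₀)`. -/
theorem pointwise_control_finite_hautus
    (c : ℝ) (hc : π ^ 2 < c) (x₀ : ℝ) (hx₀ : x₀ ∈ Set.Ioo (0 : ℝ) 1)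
    (hsin : ∀ n : ℕ, 1 ≤ n → n ≤ ⌊Real.sqrt c / π⌋₊ → Real.sin (n * π * x₀) ≠ 0) :
    ∀ β : ℝ, 0 < β → ∃ C : ℝ, 0 < C ∧
      ∀ lam : ℂ, -β < lam.re → ∀ a : ℕ → ℂ,
        ∑ n ∈ Finset.Icc 1 ⌊Real.sqrt c / π⌋₊, ‖a n‖ ^ 2
          ≤ C * ((∑ n ∈ Finset.Icc 1 ⌊Real.sqrt c / π⌋₊,
              ‖(lam - ((c - n ^ 2 * π ^ 2 : ℝ) : ℂ)) * a n‖ ^ 2)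
            + ‖∑ n ∈ Finset.Icc 1 ⌊Real.sqrt c / π⌋₊,
                a n * ((Real.sqrt 2 * Real.sin (n * π * x₀) : ℝ) : ℂ)‖ ^ 2) := by
  intro β _
  obtain ⟨C, hC, h⟩ := pointwise_control_finite_hautus_general _ c x₀ fun n hn ↦
    hsin n (mem_Icc.1 hn).1 (mem_Icc.1 hn).2
  exact ⟨C, hC, fun lam _ ↦ h lam⟩
end

section
/- Let c > π², n* := ⌊√c/π⌋, for each positive integer n set λ_n := c − n²π², let x₀ ∈ (0,1) satisfy sin(nπx₀) ≠ 0 for every integer n with 1 ≤ n ≤ n*, and set β := ((n*+1)²π² − c)/2 (which is positive). Then there exists C > 0 such that for every λ ∈ ℂ with Re λ > −β and every sequence (a_n)_{n≥1} of complex numbers with Σ_{n≥1} n⁴·|a_n|² < ∞, one has Σ_{n≥1} |a_n|² ≤ C·( Σ_{n≥1} |(λ − λ_n)·a_n|² + |Σ_{n≥1} a_n·√2·sin(nπx₀)|² ). -/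
open Real

/-!
Let `s_n = e_n(x₀)`. The modes with `λ_n ≥ -β` are finitely many and have `s_n ≠ 0`, so some
`ε > 0` satisfies `ε ≤ |s_n|` for every mode with `λ_n > -β - ε`, and `2ε` can be taken below the
spectral gap. For `Re λ > -β` at most one eigenvalue `λ_{n₀}` is then within `ε` of `λ`; all others
satisfy `|λ - λ_n| ≥ m_n := max ε (-β - λ_n)`, a bound independent of `λ`. Away from `n₀` the
coefficients are controlled by `∑ |(λ - λ_n) a_n|²`, and so is their contribution to the
observation, by Cauchy–Schwarz and `∑ |s_n / m_n|² < ∞`. Subtracting that contribution from the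
observation leaves `a_{n₀} s_{n₀}`, where `|s_{n₀}| ≥ ε` because `λ_{n₀} > -β - ε`.
-/

open Filter Function

section TsumEstimates

variable {ι : Type*}

theorem summable_mul_of_summable_sq {f g : ι → ℝ} (hf : Summable fun n => f n ^ 2)
    (hg : Summable fun n => g n ^ 2) : Summable fun n => f n * g n := by
  refine ((hf.add hg).div_const 2).of_norm_bounded fun n => ?_
  rw [Real.norm_eq_abs, abs_mul, ← sq_abs (f n), ← sq_abs (g n)]
  linarith [two_mul_le_add_sq |f n| |g n|]

theorem sq_tsum_mul_le_tsum_sq_mul_tsum_sq {f g : ι → ℝ} (hf : Summable fun n => f n ^ 2)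
    (hg : Summable fun n => g n ^ 2) :
    (∑' n, f n * g n) ^ 2 ≤ (∑' n, f n ^ 2) * ∑' n, g n ^ 2 :=
  le_of_tendsto_of_tendsto' ((summable_mul_of_summable_sq hf hg).hasSum.pow 2)
    (Tendsto.mul hf.hasSum hg.hasSum) fun t => Finset.sum_mul_sq_le_sq_mul_sq t f g

theorem tsum_eq_add_tsum_update [DecidableEq ι] {E F : Type*} [Zero E] [AddCommMonoid F]
    [TopologicalSpace F] [ContinuousAdd F] [T2Space F]
    {φ : ι → E → F} (b : ι → E) {n₀ : ι} (hφ : φ n₀ 0 = 0)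
    (h : Summable fun n => φ n (update b n₀ 0 n)) :
    ∑' n, φ n (b n) = φ n₀ (b n₀) + ∑' n, φ n (update b n₀ 0 n) := by
  have hupdate : update (fun n => φ n (b n)) n₀ 0 = fun n => φ n (update b n₀ 0 n) := by
    funext n
    rw [apply_update φ, hφ]
  rw [← hupdate] at h ⊢
  rw [h.tsum_eq_add_tsum_ite' n₀]
  exact congrArg _ (tsum_congr fun n => (update_apply (fun n => φ n (b n)) n₀ 0 n).symm)

end TsumEstimates

section Diagonal

variable {ι 𝕜 : Type*} [NormedField 𝕜]
  {b s μ : ι → 𝕜} {m g : ι → ℝ} {δ σ : ℝ}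

theorem summable_norm_sq_of_mul_norm_le (hδ : 0 < δ) (hbg : ∀ n, δ * ‖b n‖ ≤ g n)
    (hg : Summable fun n => g n ^ 2) : Summable fun n => ‖b n‖ ^ 2 := by
  refine (hg.div_const (δ ^ 2)).of_nonneg_of_le (fun n => sq_nonneg _) fun n => ?_
  rw [le_div_iff₀ (by positivity), ← mul_pow, mul_comm]
  exact pow_le_pow_left₀ (by positivity) (hbg n) 2

theorem tsum_norm_sq_le_of_mul_norm_le (hδ : 0 < δ) (hbg : ∀ n, δ * ‖b n‖ ≤ g n)
    (hg : Summable fun n => g n ^ 2) : ∑' n, ‖b n‖ ^ 2 ≤ 1 / δ ^ 2 * ∑' n, g n ^ 2 := by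
  rw [one_div, ← div_eq_inv_mul, le_div_iff₀ (by positivity), mul_comm, ← tsum_mul_left]
  refine ((summable_norm_sq_of_mul_norm_le hδ hbg hg).mul_left _).tsum_le_tsum (fun n => ?_) hg
  rw [← mul_pow]
  exact pow_le_pow_left₀ (by positivity) (hbg n) 2

theorem norm_mul_le_div_mul (hm : ∀ n, 0 < m n) (hbg : ∀ n, m n * ‖b n‖ ≤ g n) (n : ι) :
    ‖b n * s n‖ ≤ ‖s n‖ / m n * g n := by
  calc ‖b n * s n‖ = ‖s n‖ / m n * (m n * ‖b n‖) := by
        rw [norm_mul]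
        field_simp [(hm n).ne']
    _ ≤ ‖s n‖ / m n * g n :=
        mul_le_mul_of_nonneg_left (hbg n) (div_nonneg (norm_nonneg _) (hm n).le)

theorem norm_tsum_mul_sq_le_of_mul_norm_le (hm : ∀ n, 0 < m n) (hbg : ∀ n, m n * ‖b n‖ ≤ g n)
    (hs : Summable fun n => (‖s n‖ / m n) ^ 2) (hg : Summable fun n => g n ^ 2) :
    ‖∑' n, b n * s n‖ ^ 2 ≤ (∑' n, (‖s n‖ / m n) ^ 2) * ∑' n, g n ^ 2 :=
  calc ‖∑' n, b n * s n‖ ^ 2 ≤ (∑' n, ‖s n‖ / m n * g n) ^ 2 := by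
        gcongr
        exact tsum_of_norm_bounded (summable_mul_of_summable_sq hs hg).hasSum
          (norm_mul_le_div_mul hm hbg)
    _ ≤ _ := sq_tsum_mul_le_tsum_sq_mul_tsum_sq hs hg

variable [CompleteSpace 𝕜]

theorem summable_mul_of_mul_norm_le (hm : ∀ n, 0 < m n) (hbg : ∀ n, m n * ‖b n‖ ≤ g n)
    (hs : Summable fun n => (‖s n‖ / m n) ^ 2) (hg : Summable fun n => g n ^ 2) :
    Summable fun n => b n * s n :=
  (summable_mul_of_summable_sq hs hg).of_norm_bounded (norm_mul_le_div_mul hm hbg)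

theorem norm_apply_sq_le_of_mul_norm_update_le [DecidableEq ι] {n₀ : ι} (hm : ∀ n, 0 < m n)
    (hbg : ∀ n, m n * ‖update b n₀ 0 n‖ ≤ g n) (hσ : 0 < σ) (hs₀ : σ ≤ ‖s n₀‖)
    (hs : Summable fun n => (‖s n‖ / m n) ^ 2) (hg : Summable fun n => g n ^ 2) :
    ‖b n₀‖ ^ 2 ≤
      2 * (‖∑' n, b n * s n‖ ^ 2 + (∑' n, (‖s n‖ / m n) ^ 2) * ∑' n, g n ^ 2) / σ ^ 2 := by
  have hsplit := tsum_eq_add_tsum_update (φ := fun n z => z * s n) b (zero_mul (s n₀))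
    (summable_mul_of_mul_norm_le hm hbg hs hg)
  rw [le_div_iff₀ (by positivity), ← mul_pow]
  calc (‖b n₀‖ * σ) ^ 2 ≤ ‖b n₀ * s n₀‖ ^ 2 := by
        rw [norm_mul]
        gcongr
    _ = ‖∑' n, b n * s n - ∑' n, update b n₀ 0 n * s n‖ ^ 2 := by
        rw [hsplit, add_sub_cancel_right]
    _ ≤ (‖∑' n, b n * s n‖ + ‖∑' n, update b n₀ 0 n * s n‖) ^ 2 := by
        gcongr
        exact norm_sub_le _ _
    _ ≤ 2 * (‖∑' n, b n * s n‖ ^ 2 + ‖∑' n, update b n₀ 0 n * s n‖ ^ 2) := add_sq_le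
    _ ≤ _ := by
        gcongr
        exact norm_tsum_mul_sq_le_of_mul_norm_le hm hbg hs hg

theorem tsum_norm_sq_le_of_forall_ne_le_norm {n₀ : ι} (hδ : 0 < δ) (hm : ∀ n, δ ≤ m n)
    (hμ : ∀ n, n ≠ n₀ → m n ≤ ‖μ n‖) (hσ : 0 < σ) (hs₀ : σ ≤ ‖s n₀‖)
    (hs : Summable fun n => (‖s n‖ / m n) ^ 2) (hμb : Summable fun n => ‖μ n * b n‖ ^ 2) :
    ∑' n, ‖b n‖ ^ 2 ≤ (1 / δ ^ 2 + 2 * (1 + ∑' n, (‖s n‖ / m n) ^ 2) / σ ^ 2) *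
      (∑' n, ‖μ n * b n‖ ^ 2 + ‖∑' n, b n * s n‖ ^ 2) := by
  classical
  have hm₀ : ∀ n, 0 < m n := fun n => hδ.trans_le (hm n)
  have hbm : ∀ n, m n * ‖update b n₀ 0 n‖ ≤ ‖μ n * b n‖ := fun n => by
    rcases eq_or_ne n n₀ with rfl | hn
    · simp only [update_self, norm_zero, mul_zero, norm_nonneg]
    · rw [update_of_ne hn, norm_mul]
      gcongr
      exact hμ n hn
  have hbδ : ∀ n, δ * ‖update b n₀ 0 n‖ ≤ ‖μ n * b n‖ := fun n =>
    (mul_le_mul_of_nonneg_right (hm n) (norm_nonneg _)).trans (hbm n)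
  have hsplit := tsum_eq_add_tsum_update (φ := fun _ z => ‖z‖ ^ 2) b
    (by rw [norm_zero, zero_pow two_ne_zero])
    (summable_norm_sq_of_mul_norm_le hδ hbδ hμb)
  have hmode := norm_apply_sq_le_of_mul_norm_update_le hm₀ hbm hσ hs₀ hs hμb
  have htail := tsum_norm_sq_le_of_mul_norm_le hδ hbδ hμb
  set F := ∑' n, ‖μ n * b n‖ ^ 2
  set W := ∑' n, (‖s n‖ / m n) ^ 2
  set S := ‖∑' n, b n * s n‖
  have hF : 0 ≤ F := tsum_nonneg fun n => sq_nonneg _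
  have hW : 0 ≤ W := tsum_nonneg fun n => sq_nonneg _
  calc ∑' n, ‖b n‖ ^ 2 ≤ 2 * (S ^ 2 + W * F) / σ ^ 2 + 1 / δ ^ 2 * F := by
        rw [hsplit]
        gcongr
    _ ≤ 2 * ((1 + W) * (F + S ^ 2)) / σ ^ 2 + 1 / δ ^ 2 * (F + S ^ 2) := by
        gcongr
        · linarith [mul_nonneg hW (sq_nonneg S)]
        · exact le_add_of_nonneg_right (sq_nonneg S)
    _ = _ := by ring

end Diagonal

/-- The condition (HESI)_β (Hautus estimate on the half-plane `Re λ > -β`) for the diagonal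
operator with real eigenvalues `ν n` and the observation functional `b ↦ ∑ b n * s n`.
The summability condition says that `b` lies in the domain of the operator. -/
def DiagonalHESI {ι : Type*} (ν : ι → ℝ) (s : ι → ℂ) (β : ℝ) : Prop :=
  ∃ C : ℝ, 0 < C ∧ ∀ lam : ℂ, -β < lam.re → ∀ b : ι → ℂ,
    Summable (fun n => ((1 + |ν n|) * ‖b n‖) ^ 2) →
    ∑' n, ‖b n‖ ^ 2 ≤ C * (∑' n, ‖(lam - ν n) * b n‖ ^ 2 + ‖∑' n, b n * s n‖ ^ 2)

section Hautus

variable {ι : Type*} {ν : ι → ℝ} {β γ ε : ℝ}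

theorem subsingleton_setOf_norm_sub_lt (hgap : Pairwise fun m n => 2 * ε ≤ |ν m - ν n|)
    (lam : ℂ) : {n | ‖lam - ν n‖ < ε}.Subsingleton := by
  intro m (hm : ‖lam - ν m‖ < ε) n (hn : ‖lam - ν n‖ < ε)
  by_contra hmn
  have hdist : |ν m - ν n| ≤ ‖lam - ν n‖ + ‖lam - ν m‖ := by
    rw [← Real.norm_eq_abs, ← Complex.norm_real, Complex.ofReal_sub,
      ← sub_sub_sub_cancel_left (ν n : ℂ) (ν m : ℂ) lam]
    exact norm_sub_le _ _
  linarith [hgap hmn]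

theorem max_le_norm_sub {lam : ℂ} {x : ℝ} (hlam : -β < lam.re) (hε : ε ≤ ‖lam - x‖) :
    max ε (-β - x) ≤ ‖lam - x‖ := by
  refine max_le hε (le_trans ?_ (Complex.re_le_norm _))
  rw [Complex.sub_re, Complex.ofReal_re]
  linarith

theorem summable_norm_sub_mul_sq {b : ι → ℂ}
    (hb : Summable fun n => ((1 + |ν n|) * ‖b n‖) ^ 2) (lam : ℂ) :
    Summable fun n => ‖(lam - ν n) * b n‖ ^ 2 := by
  refine (hb.mul_left ((1 + ‖lam‖) ^ 2)).of_nonneg_of_le (fun n => sq_nonneg _) fun n => ?_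
  rw [← mul_pow, norm_mul, ← mul_assoc]
  have hν : ‖lam - ν n‖ ≤ ‖lam‖ + |ν n| := by
    simpa only [Complex.norm_real, Real.norm_eq_abs] using norm_sub_le lam (ν n : ℂ)
  gcongr
  nlinarith [norm_nonneg lam, abs_nonneg (ν n)]

theorem summable_div_max_sq {f : ι → ℝ} (hν : Tendsto ν cofinite atBot)
    (hf : Summable fun n => (f n / (1 + |ν n|)) ^ 2) (β ε : ℝ) :
    Summable fun n => (f n / max ε (-β - ν n)) ^ 2 := by
  refine (hf.mul_left 4).of_norm_bounded_eventually ?_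
  filter_upwards [hν.eventually_le_atBot (-1 - 2 * |β|)] with n hn
  have hden : (1 + |ν n|) / 2 ≤ max ε (-β - ν n) := by
    refine le_max_of_le_right ?_
    rw [abs_of_nonpos (by linarith [abs_nonneg β])]
    linarith [le_abs_self β]
  rw [norm_of_nonneg (sq_nonneg _), div_pow]
  calc f n ^ 2 / max ε (-β - ν n) ^ 2 ≤ f n ^ 2 / ((1 + |ν n|) / 2) ^ 2 := by gcongr
    _ = 4 * (f n / (1 + |ν n|)) ^ 2 := by
      field_simp
      ring

theorem exists_pos_forall_lt_imp_le_norm {s : ι → ℂ} (hν : Tendsto ν cofinite atBot)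
    (hs : ∀ n, -β ≤ ν n → s n ≠ 0) (hγ : 0 < γ) :
    ∃ ε, 0 < ε ∧ ε ≤ γ ∧ ∀ n, -β - ε < ν n → ε ≤ ‖s n‖ := by
  have hfin : {n | ¬ν n ≤ -β - γ}.Finite := hν.eventually_le_atBot (-β - γ)
  have hlocal : ∀ n, ∀ᶠ ε in nhdsWithin (0 : ℝ) (Set.Ioi 0), -β - ε < ν n → ε ≤ ‖s n‖ := by
    intro n
    rcases le_or_gt (-β) (ν n) with hn | hn
    · filter_upwards [Ioo_mem_nhdsGT (norm_pos_iff.2 (hs n hn))] with ε hε _ using hε.2.le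
    · filter_upwards [Ioo_mem_nhdsGT (sub_pos.2 hn)] with ε hε hεn
      linarith [hε.2]
  have hall := (hfin.eventually_all (p := fun n ε => -β - ε < ν n → ε ≤ ‖s n‖)).2
    fun n _ => hlocal n
  obtain ⟨ε, hεs, hε, hεγ⟩ := (hall.and (Ioc_mem_nhdsGT hγ)).exists
  refine ⟨ε, hε, hεγ, fun n hn => hεs n ?_ hn⟩
  simp only [Set.mem_ofPred_eq, not_le]
  linarith

theorem diagonalHESI_of_gap {s : ι → ℂ} (hγ : 0 < γ)
    (hgap : Pairwise fun m n => γ ≤ |ν m - ν n|) (hν : Tendsto ν cofinite atBot)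
    (hs : Summable fun n => (‖s n‖ / (1 + |ν n|)) ^ 2) (hobs : ∀ n, -β ≤ ν n → s n ≠ 0) :
    DiagonalHESI ν s β := by
  obtain ⟨ε, hε, hεγ, hεs⟩ := exists_pos_forall_lt_imp_le_norm hν hobs (half_pos hγ)
  set m : ι → ℝ := fun n => max ε (-β - ν n)
  have hsm : Summable fun n => (‖s n‖ / m n) ^ 2 := summable_div_max_sq hν hs β ε
  have : 0 ≤ ∑' n, (‖s n‖ / m n) ^ 2 := tsum_nonneg fun n => sq_nonneg _
  refine ⟨1 / ε ^ 2 + 2 * (1 + ∑' n, (‖s n‖ / m n) ^ 2) / ε ^ 2, by positivity,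
    fun lam hlam b hb => ?_⟩
  have hF := summable_norm_sub_mul_sq hb lam
  have hsub := subsingleton_setOf_norm_sub_lt
    (hgap.mono fun _ _ h => (by linarith : 2 * ε ≤ γ).trans h) lam
  rcases hsub.eq_empty_or_singleton with hnone | ⟨n₀, hn₀⟩
  · have hfar : ∀ n, ε ≤ ‖lam - ν n‖ := fun n =>
      not_lt.1 (Set.eq_empty_iff_forall_notMem.1 hnone n)
    refine (tsum_norm_sq_le_of_mul_norm_le hε (fun n => ?_) hF).trans ?_
    · rw [norm_mul]
      gcongr
      exact hfar n
    · gcongr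
      · exact le_add_of_nonneg_right (by positivity)
      · exact le_add_of_nonneg_right (sq_nonneg _)
  · have hnear : ‖lam - ν n₀‖ < ε := (Set.ext_iff.1 hn₀ n₀).2 rfl
    have hfar : ∀ n, n ≠ n₀ → ε ≤ ‖lam - ν n‖ := fun n hn =>
      not_lt.1 fun h => hn ((Set.ext_iff.1 hn₀ n).1 h)
    have hunstable : -β - ε < ν n₀ := by
      have := (Complex.re_le_norm (lam - ν n₀)).trans_lt hnear
      rw [Complex.sub_re, Complex.ofReal_re] at this
      linarith
    exact tsum_norm_sq_le_of_forall_ne_le_norm hε (fun n => le_max_left _ _)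
      (fun n hn => max_le_norm_sub hlam (hfar n hn)) hε (hεs n₀ hunstable) hsm hF

end Hautus

/-- The eigenvalue `λ_k = c - k²π²` of `d²/dx² + c` on `(0, 1)` with Dirichlet boundary
conditions; the modes are those with `k ≥ 1`. -/
noncomputable def heatEigenvalue (c : ℝ) (k : ℕ) : ℝ := c - (k : ℝ) ^ 2 * π ^ 2

/-- The value `e_k(x₀) = √2 sin(kπx₀)` at `x₀` of the `k`-th normalized Dirichlet eigenfunction,
i.e. the `k`-th coefficient of the point observation at `x₀`. -/
noncomputable def eigenfunctionValue (x₀ : ℝ) (k : ℕ) : ℝ := √2 * sin ((k : ℝ) * π * x₀)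

section Heat

variable (c x₀ : ℝ)

theorem pi_sq_le_abs_heatEigenvalue_sub {j k : ℕ} (hjk : j ≠ k) :
    π ^ 2 ≤ |heatEigenvalue c j - heatEigenvalue c k| := by
  have hsq : ((k : ℤ) ^ 2 - (j : ℤ) ^ 2) ≠ 0 := by
    rw [sub_ne_zero]
    exact_mod_cast (Nat.pow_left_injective two_ne_zero).ne hjk.symm
  have hone : (1 : ℝ) ≤ |(k : ℝ) ^ 2 - (j : ℝ) ^ 2| := by exact_mod_cast Int.one_le_abs hsq
  calc π ^ 2 ≤ |(k : ℝ) ^ 2 - (j : ℝ) ^ 2| * π ^ 2 := le_mul_of_one_le_left (sq_nonneg π) hone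
    _ = |heatEigenvalue c j - heatEigenvalue c k| := by
      rw [heatEigenvalue, heatEigenvalue, sub_sub_sub_cancel_left, ← sub_mul, abs_mul,
        abs_of_nonneg (sq_nonneg π)]

theorem tendsto_heatEigenvalue : Tendsto (heatEigenvalue c) atTop atBot := by
  refine tendsto_atBot_add_const_left _ c (tendsto_neg_atTop_atBot.comp ?_)
  exact ((tendsto_pow_atTop two_ne_zero).comp tendsto_natCast_atTop_atTop).atTop_mul_const
    (by positivity)

theorem one_add_abs_heatEigenvalue_le {k : ℕ} (hk : 1 ≤ k) :
    1 + |heatEigenvalue c k| ≤ (1 + |c| + π ^ 2) * (k : ℝ) ^ 2 := by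
  have hk2 : (1 : ℝ) ≤ (k : ℝ) ^ 2 := one_le_pow₀ (by exact_mod_cast hk)
  have hν : |heatEigenvalue c k| ≤ |c| + (k : ℝ) ^ 2 * π ^ 2 := by
    refine (abs_sub c ((k : ℝ) ^ 2 * π ^ 2)).trans_eq ?_
    rw [abs_of_nonneg (by positivity : 0 ≤ (k : ℝ) ^ 2 * π ^ 2)]
  nlinarith [abs_nonneg c]

theorem sq_le_one_add_abs_heatEigenvalue (k : ℕ) :
    (k : ℝ) ^ 2 ≤ (1 + |c|) * (1 + |heatEigenvalue c k|) := by
  have hν : (k : ℝ) ^ 2 * π ^ 2 ≤ |c| + |heatEigenvalue c k| := by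
    have := neg_abs_le (heatEigenvalue c k)
    unfold heatEigenvalue at this ⊢
    linarith [le_abs_self c]
  have hπ : (1 : ℝ) ≤ π ^ 2 := one_le_pow₀ (by linarith [pi_gt_three])
  nlinarith [abs_nonneg c, abs_nonneg (heatEigenvalue c k), sq_nonneg (k : ℝ),
    mul_nonneg (abs_nonneg c) (abs_nonneg (heatEigenvalue c k))]

theorem abs_eigenfunctionValue_le (k : ℕ) : |eigenfunctionValue x₀ k| ≤ √2 := by
  rw [eigenfunctionValue, abs_mul, abs_of_nonneg (sqrt_nonneg 2)]
  exact mul_le_of_le_one_right (sqrt_nonneg 2) (abs_sin_le_one _)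

theorem summable_eigenfunctionValue_div_sq :
    Summable fun k : ℕ => (|eigenfunctionValue x₀ k| / (1 + |heatEigenvalue c k|)) ^ 2 := by
  have hsum : Summable fun k : ℕ => 2 * (1 + |c|) ^ 2 * (1 / (k : ℝ) ^ 4) :=
    (Real.summable_one_div_nat_pow.2 (by norm_num)).mul_left _
  refine hsum.of_norm_bounded_eventually_nat ?_
  filter_upwards [eventually_gt_atTop 0] with k hk
  have : (0 : ℝ) < k := by exact_mod_cast hk
  rw [Real.norm_of_nonneg (sq_nonneg _)]
  calc (|eigenfunctionValue x₀ k| / (1 + |heatEigenvalue c k|)) ^ 2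
      ≤ (√2 / ((k : ℝ) ^ 2 / (1 + |c|))) ^ 2 := by
        gcongr
        · exact abs_eigenfunctionValue_le x₀ k
        · rw [div_le_iff₀' (by positivity)]
          exact sq_le_one_add_abs_heatEigenvalue c k
    _ = 2 * (1 + |c|) ^ 2 * (1 / (k : ℝ) ^ 4) := by
        rw [div_pow, sq_sqrt zero_le_two]
        field_simp

theorem diagonalHESI_heatEigenvalue {β : ℝ}
    (hobs : ∀ k : ℕ, 1 ≤ k → -β ≤ heatEigenvalue c k → sin (k * π * x₀) ≠ 0) :
    DiagonalHESI (fun n : ℕ => heatEigenvalue c (n + 1))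
      (fun n => (eigenfunctionValue x₀ (n + 1) : ℂ)) β := by
  refine diagonalHESI_of_gap (γ := π ^ 2) (by positivity)
    (fun m n hmn => pi_sq_le_abs_heatEigenvalue_sub c (by omega)) ?_ ?_ fun n hn => ?_
  · rw [Nat.cofinite_eq_atTop]
    exact (tendsto_heatEigenvalue c).comp (tendsto_add_atTop_nat 1)
  · simpa only [Complex.norm_real, Real.norm_eq_abs]
      using (summable_nat_add_iff 1).2 (summable_eigenfunctionValue_div_sq c x₀)
  · rw [Complex.ofReal_ne_zero]
    exact mul_ne_zero (by positivity) (hobs (n + 1) (Nat.le_add_left 1 n) hn)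

theorem summable_one_add_abs_heatEigenvalue_mul_sq {a : ℕ → ℂ}
    (ha : Summable fun n : ℕ => ((n + 1 : ℕ) : ℝ) ^ 4 * ‖a (n + 1)‖ ^ 2) :
    Summable fun n : ℕ => ((1 + |heatEigenvalue c (n + 1)|) * ‖a (n + 1)‖) ^ 2 := by
  refine (ha.mul_left ((1 + |c| + π ^ 2) ^ 2)).of_nonneg_of_le (fun n => sq_nonneg _) fun n => ?_
  calc ((1 + |heatEigenvalue c (n + 1)|) * ‖a (n + 1)‖) ^ 2
      ≤ ((1 + |c| + π ^ 2) * ((n + 1 : ℕ) : ℝ) ^ 2 * ‖a (n + 1)‖) ^ 2 := by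
        gcongr
        exact one_add_abs_heatEigenvalue_le c (Nat.le_add_left 1 n)
    _ = (1 + |c| + π ^ 2) ^ 2 * (((n + 1 : ℕ) : ℝ) ^ 4 * ‖a (n + 1)‖ ^ 2) := by ring

end Heat

theorem lt_sq_floor_sqrt_div_add_one_mul_sq (c : ℝ) {r : ℝ} (hr : 0 < r) :
    c < ((⌊√c / r⌋₊ + 1 : ℕ) : ℝ) ^ 2 * r ^ 2 := by
  have h := Nat.lt_floor_add_one (√c / r)
  rw [div_lt_iff₀ hr, sqrt_lt' (by positivity), mul_pow] at h
  exact_mod_cast h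

theorem le_floor_sqrt_div_of_neg_le_heatEigenvalue {c : ℝ} {k : ℕ}
    (hk : -(((⌊√c / π⌋₊ + 1 : ℕ) ^ 2 * π ^ 2 - c) / 2) ≤ heatEigenvalue c k) :
    k ≤ ⌊√c / π⌋₊ := by
  have hc := lt_sq_floor_sqrt_div_add_one_mul_sq c pi_pos
  have hlt : (k : ℝ) ^ 2 * π ^ 2 < ((⌊√c / π⌋₊ + 1 : ℕ) : ℝ) ^ 2 * π ^ 2 := by
    rw [heatEigenvalue] at hk
    linarith
  have hlt' := lt_of_pow_lt_pow_left₀ 2 (by positivity) (lt_of_mul_lt_mul_right hlt (sq_nonneg π))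
  exact Nat.lt_succ_iff.1 (by exact_mod_cast hlt')

theorem pointwise_control_HESI_general (c x₀ β : ℝ)
    (hobs : ∀ n : ℕ, 1 ≤ n → -β ≤ c - (n : ℝ) ^ 2 * π ^ 2 → sin (n * π * x₀) ≠ 0) :
    ∃ C : ℝ, 0 < C ∧ ∀ lam : ℂ, -β < lam.re → ∀ a : ℕ → ℂ,
      Summable (fun n : ℕ => ((n + 1 : ℕ) : ℝ) ^ 4 * ‖a (n + 1)‖ ^ 2) →
      ∑' n : ℕ, ‖a (n + 1)‖ ^ 2
        ≤ C * ((∑' n : ℕ,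
            ‖(lam - ((c - ((n + 1 : ℕ) : ℝ) ^ 2 * π ^ 2 : ℝ) : ℂ)) * a (n + 1)‖ ^ 2)
          + ‖∑' n : ℕ, a (n + 1) *
              ((√2 * sin (((n + 1 : ℕ) : ℝ) * π * x₀) : ℝ) : ℂ)‖ ^ 2) := by
  obtain ⟨C, hC, hHESI⟩ := diagonalHESI_heatEigenvalue c x₀ hobs
  exact ⟨C, hC, fun lam hlam a ha => hHESI lam hlam (fun n => a (n + 1))
    (summable_one_add_abs_heatEigenvalue_mul_sq c ha)⟩

/-- The condition (HESI)_β, in sine-series form, for the one-dimensional heat equation with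
point-wise control `y_t = y_xx + c y + δ(· - x₀) u`, with
`β = ((n*+1)²π² - c)/2 > 0` where `n* = ⌊√c/π⌋`: sequences `(a_n)_{n ≥ 1}` are encoded as
`a : ℕ → ℂ` evaluated at `n + 1`. -/
theorem pointwise_control_HESI
    (c : ℝ) (hc : π ^ 2 < c) (x₀ : ℝ) (hx₀ : x₀ ∈ Set.Ioo (0 : ℝ) 1)
    (hsin : ∀ n : ℕ, 1 ≤ n → n ≤ ⌊Real.sqrt c / π⌋₊ → Real.sin (n * π * x₀) ≠ 0) :
    ∃ C : ℝ, 0 < C ∧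
      ∀ lam : ℂ, -(((⌊Real.sqrt c / π⌋₊ + 1 : ℕ) ^ 2 * π ^ 2 - c) / 2) < lam.re →
        ∀ a : ℕ → ℂ,
          Summable (fun n : ℕ => ((n + 1 : ℕ) : ℝ) ^ 4 * ‖a (n + 1)‖ ^ 2) →
          ∑' n : ℕ, ‖a (n + 1)‖ ^ 2
            ≤ C * ((∑' n : ℕ,
                ‖(lam - ((c - ((n + 1 : ℕ) : ℝ) ^ 2 * π ^ 2 : ℝ) : ℂ)) * a (n + 1)‖ ^ 2)
              + ‖∑' n : ℕ, a (n + 1) *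
                  ((Real.sqrt 2 * Real.sin (((n + 1 : ℕ) : ℝ) * π * x₀) : ℝ) : ℂ)‖ ^ 2) := by
  exact pointwise_control_HESI_general c x₀ _ fun n hn hstable =>
    hsin n hn (le_floor_sqrt_div_of_neg_le_heatEigenvalue hstable)
end

section
/- Let c > π² and n* := ⌊√c/π⌋, and for each positive integer n set λ_n := c − n²π². Suppose x₀ = k/n ∈ (0,1) for some positive integers k and n with n ≤ n*. Then for every β > 0 there is no constant C > 0 such that for all λ ∈ ℂ with Re λ > −β and all sequences (a_m)_{m≥1} of complex numbers with Σ_{m≥1} m⁴·|a_m|² < ∞ one has Σ_{m≥1} |a_m|² ≤ C·( Σ_{m≥1} |(λ − λ_m)·a_m|² + |Σ_{m≥1} a_m·√2·sin(mπx₀)|² ). (Indeed, the choice λ = λ_n ≥ 0 and a_m = 1 if m = n, a_m = 0 otherwise, makes the left-hand side equal to 1 and the right-hand side equal to 0.) -/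
open Real

/-!
If the eigenfunction `e_n` vanishes at `x₀`, point observation at `x₀` cannot see the `n`-th mode.
Testing the inequality at `λ = λ_n` with the pure mode `e_n` then reads `1 ≤ 0`, and this test is
admissible as soon as `-β < λ_n`.
-/

/-- The Hautus-type inequality at the spectral parameter `lam`, for the coefficient sequence `a`:
`μ` lists the eigenvalues of a diagonal operator and `b` the values of the observation functional
on the eigenvectors. It is meant for `a` making the three series converge; a divergent `tsum`
is `0`. -/
def HautusInequality {ι 𝕜 : Type*} [NormedField 𝕜] (μ b : ι → 𝕜) (C : ℝ) (lam : 𝕜)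
    (a : ι → 𝕜) : Prop :=
  ∑' i, ‖a i‖ ^ 2 ≤ C * (∑' i, ‖(lam - μ i) * a i‖ ^ 2 + ‖∑' i, a i * b i‖ ^ 2)

theorem not_hautusInequality_single {ι 𝕜 : Type*} [DecidableEq ι] [NormedField 𝕜]
    {μ b : ι → 𝕜} {i : ι} (hb : b i = 0) (C : ℝ) :
    ¬ HautusInequality μ b C (μ i) (Pi.single i 1) := by
  have mass : ∑' j, ‖(Pi.single i 1 : ι → 𝕜) j‖ ^ 2 = 1 := by
    rw [tsum_eq_single i fun j hj ↦ by simp [hj]]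
    simp
  have residual (j : ι) : (μ i - μ j) * (Pi.single i 1 : ι → 𝕜) j = 0 := by
    obtain rfl | hj := eq_or_ne j i <;> simp [*]
  have observation (j : ι) : (Pi.single i 1 : ι → 𝕜) j * b j = 0 := by
    obtain rfl | hj := eq_or_ne j i <;> simp [*]
  simp [HautusInequality, mass, residual, observation]

/-- The `n`-th eigenvalue `λ_n` of `d²/dx² + c` on `(0, 1)` with Dirichlet boundary conditions,
for `n ≥ 1`. -/
noncomputable def dirichletEigenvalue (c : ℝ) (n : ℕ) : ℝ := c - (n : ℝ) ^ 2 * π ^ 2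

/-- The normalized eigenfunction `e_n` for the eigenvalue `dirichletEigenvalue c n`, for `n ≥ 1`. -/
noncomputable def dirichletEigenfunction (n : ℕ) (x : ℝ) : ℝ := √2 * sin (n * π * x)

theorem dirichletEigenvalue_nonneg_iff {c : ℝ} (hc : 0 ≤ c) {n : ℕ} :
    0 ≤ dirichletEigenvalue c n ↔ n ≤ ⌊√c / π⌋₊ := by
  rw [Nat.le_floor_iff (by positivity), le_div_iff₀ pi_pos, le_sqrt (by positivity) hc, mul_pow,
    dirichletEigenvalue, sub_nonneg]

theorem dirichletEigenfunction_int_div {n : ℕ} (hn : n ≠ 0) (k : ℤ) :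
    dirichletEigenfunction n (k / n) = 0 := by
  have phase : (n : ℝ) * π * (k / n) = k * π := by field_simp
  rw [dirichletEigenfunction, phase, sin_int_mul_pi, mul_zero]

/-- The condition (HESI)_β for point observation at `x₀`: the Hautus-type inequality holds on the
domain of the operator, uniformly in the half-plane `Re λ > -β`. Modes are numbered from `1`, so
`a 0` is ignored; the weight `m⁴` makes all the series in the inequality converge. -/
def PointwiseHESI (c x₀ β : ℝ) : Prop :=
  ∃ C : ℝ, 0 < C ∧ ∀ lam : ℂ, -β < lam.re → ∀ a : ℕ → ℂ,
    Summable (fun m : ℕ ↦ ((m + 1 : ℕ) : ℝ) ^ 4 * ‖a (m + 1)‖ ^ 2) →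
    HautusInequality (fun m ↦ (dirichletEigenvalue c (m + 1) : ℂ))
      (fun m ↦ (dirichletEigenfunction (m + 1) x₀ : ℂ)) C lam (fun m ↦ a (m + 1))

theorem not_pointwiseHESI_of_eigenfunction_eq_zero {c x₀ β : ℝ} {n : ℕ} (hn : n ≠ 0)
    (hnode : dirichletEigenfunction n x₀ = 0) (hβ : -β < dirichletEigenvalue c n) :
    ¬ PointwiseHESI c x₀ β := by
  rintro ⟨C, -, hC⟩
  obtain ⟨p, rfl⟩ := Nat.exists_eq_succ_of_ne_zero hn
  have shift : (fun m ↦ (Pi.single (p + 1) 1 : ℕ → ℂ) (m + 1)) = Pi.single p 1 :=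
    Function.update_comp_eq_of_injective (0 : ℕ → ℂ) Nat.succ_injective p 1
  have mem_domain : Summable fun m : ℕ ↦
      ((m + 1 : ℕ) : ℝ) ^ 4 * ‖(Pi.single (p + 1) 1 : ℕ → ℂ) (m + 1)‖ ^ 2 :=
    (hasSum_single p fun m hm ↦ by simp [hm]).summable
  have estimate := hC (dirichletEigenvalue c (p + 1)) hβ (Pi.single (p + 1) 1) mem_domain
  rw [shift] at estimate
  exact not_hautusInequality_single (by exact_mod_cast hnode) C estimate

theorem pointwise_control_HESI_fails_of_rational_general {c x₀ β : ℝ} {k : ℤ} {n : ℕ}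
    (hn : 0 < n) (hx₀ : x₀ = k / n) (hβ : -β < dirichletEigenvalue c n) :
    ¬ PointwiseHESI c x₀ β :=
  not_pointwiseHESI_of_eigenfunction_eq_zero hn.ne'
    (hx₀ ▸ dirichletEigenfunction_int_div hn.ne' k) hβ

/-- Failure of the Hautus-type inequality (HESI)_β, for every `β > 0`, when the control
point `x₀ = k/n` is rational with `n ≤ n* = ⌊√c/π⌋`: this is why the heat equation with
point-wise control at such `x₀` is not exponentially stabilizable. Sequences
`(a_m)_{m ≥ 1}` are encoded as `a : ℕ → ℂ` evaluated at `m + 1`. -/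
theorem pointwise_control_HESI_fails_of_rational
    (c : ℝ) (hc : π ^ 2 < c) (k n : ℕ) (hk : 0 < k) (hn : 0 < n)
    (hnle : n ≤ ⌊Real.sqrt c / π⌋₊)
    (x₀ : ℝ) (hx₀def : x₀ = (k : ℝ) / n) (hx₀ : x₀ ∈ Set.Ioo (0 : ℝ) 1) :
    ∀ β : ℝ, 0 < β →
      ¬ ∃ C : ℝ, 0 < C ∧
        ∀ lam : ℂ, -β < lam.re → ∀ a : ℕ → ℂ,
          Summable (fun m : ℕ => ((m + 1 : ℕ) : ℝ) ^ 4 * ‖a (m + 1)‖ ^ 2) →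
          ∑' m : ℕ, ‖a (m + 1)‖ ^ 2
            ≤ C * ((∑' m : ℕ,
                ‖(lam - ((c - ((m + 1 : ℕ) : ℝ) ^ 2 * π ^ 2 : ℝ) : ℂ)) * a (m + 1)‖ ^ 2)
              + ‖∑' m : ℕ, a (m + 1) *
                  ((Real.sqrt 2 * Real.sin (((m + 1 : ℕ) : ℝ) * π * x₀) : ℝ) : ℂ)‖ ^ 2) := by
  intro β hβ
  have eigenvalue_nonneg : 0 ≤ dirichletEigenvalue c n :=
    (dirichletEigenvalue_nonneg_iff ((sq_nonneg π).trans hc.le)).2 hnle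
  exact pointwise_control_HESI_fails_of_rational_general (k := k) hn (by simpa using hx₀def)
    (by linarith)
end
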